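/- Let b > 0 be real, and let u, x ∈ ℂ satisfy −(b+b⁻¹)/2 < Im x < 0, |Im u| < (b+b⁻¹)/2, and |Im(u−x)| < (b+b⁻¹)/2. Then for every ε with 0 < ε < −Im x, the integral ∫_ℝ e^{−2πi(t−iε)(u+c_b)} · e_b(t−iε+c_b) / e_b(t−iε−x−c_b) dt converges absolutely, its value is independent of ε, and it equals ζ₀⁻¹ · e_b(u−x) / ( e_b(−x−c_b) · e_b(u) ), where ζ₀ := e^{πi(1−4c_b²)/12}. (All arguments of e_b occurring here lie in the strip |Im z| < (b+b⁻¹)/2, so e_b is given directly by its integral representation.) -/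

import Mathlib

open MeasureTheory Complex Real Filter Topology

noncomputable section

/-- The special point `c_b = i(b+b⁻¹)/2`. -/
def cb (b : ℝ) : ℂ := Complex.I * ((b : ℂ) + (b : ℂ)⁻¹) / 2

/-- The integrand in the integral representation of the noncompact quantum dilogarithm. -/
def ebIntegrand (b ε : ℝ) (z : ℂ) (t : ℝ) : ℂ :=
  Complex.exp (-2 * Complex.I * z * ((t : ℂ) + Complex.I * (ε : ℂ))) /
    (((t : ℂ) + Complex.I * (ε : ℂ)) *
      Complex.sinh ((b : ℂ) * ((t : ℂ) + Complex.I * (ε : ℂ))) *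
      Complex.sinh ((b : ℂ)⁻¹ * ((t : ℂ) + Complex.I * (ε : ℂ))))

/-- The noncompact quantum dilogarithm defined with contour parameter `ε`. -/
def ebE (b ε : ℝ) (z : ℂ) : ℂ :=
  Complex.exp ((1 / 4 : ℂ) * ∫ t : ℝ, ebIntegrand b ε z t)

/-- The noncompact quantum dilogarithm `e_b` (canonical choice of contour parameter;
the value is independent of this choice). -/
def eb (b : ℝ) (z : ℂ) : ℂ := ebE b (π * min b b⁻¹ / 2) z

/-- The constant `ζ₀ = e^{πi(1−4c_b²)/12}`. -/
def zeta0 (b : ℝ) : ℂ := Complex.exp ((π : ℂ) * Complex.I * (1 - 4 * (cb b) ^ 2) / 12)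

/-- The integrand of STATEMENT 9, along the contour `ℝ − iε`. -/
def stmt9Integrand (b : ℝ) (u x : ℂ) (ε : ℝ) (t : ℝ) : ℂ :=
  Complex.exp (-2 * (π : ℂ) * Complex.I * ((t : ℂ) - Complex.I * (ε : ℂ)) * (u + cb b)) *
    eb b ((t : ℂ) - Complex.I * (ε : ℂ) + cb b) /
    eb b ((t : ℂ) - Complex.I * (ε : ℂ) - x - cb b)

open Asymptotics

/-!
The integral is a Fourier–Laplace transform `F(v) = ∫ e^{-2πiyv} e_b(y + c_b) / e_b(y - x - c_b) dy`
at `v = u + c_b`. The functional equation `e_b(z) = (1 - e^{2πb(z + c_b)}) e_b(z + ib)` lets one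
shift the contour by `ib`, which gives a first-order difference equation for `F`. The function
`e_b(u - x) / e_b(u)` satisfies the same equation, so the quotient `R(u)` of the two is
`ib`-periodic. By the symmetry `b ↔ b⁻¹` one may assume `b ≤ 1`; then the strip of
holomorphy of `R` is wider than the period.

The inversion relation for `e_b(z) e_b(-z)` shows that `R` grows more slowly than `e^{2π|Re u|/b}`,
which forces it to be constant: `R'(u)` is proportional to the residue at `w = 0` of
`R(u + w) / sinh²(πw/b)`, and the integrals of this `ib`-periodic function along the two sides of a
period strip agree.

The constant is found by letting `u → -c_b`, where `F` has a simple pole, because its integrand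
without the exponential tends to `1` at `-∞`, and `e_b` has a simple zero. The slope at the zero
involves `e_b(i(b - b⁻¹)/2)`, whose modulus follows from the symmetry `b ↔ b⁻¹` together with
complex conjugation, and whose phase follows from the inversion relation.
-/

section TwoSidedExp

/-- The weight equal to `e^{-px}` for `x ≥ 0` and to `e^{qx}` for `x ≤ 0`: exponential decay at rate
`p` at `+∞` and `q` at `-∞` (growth, if the rate is negative). -/
def twoSidedExp (p q x : ℝ) : ℝ := rexp (-(p * x⁺ + q * x⁻))

lemma twoSidedExp_pos (p q x : ℝ) : 0 < twoSidedExp p q x := Real.exp_pos _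

lemma norm_twoSidedExp (p q x : ℝ) : ‖twoSidedExp p q x‖ = twoSidedExp p q x :=
  Real.norm_of_nonneg (twoSidedExp_pos p q x).le

@[fun_prop]
lemma continuous_twoSidedExp (p q : ℝ) : Continuous (twoSidedExp p q) := by
  unfold twoSidedExp
  fun_prop

lemma twoSidedExp_mul (p q p' q' x : ℝ) :
    twoSidedExp p q x * twoSidedExp p' q' x = twoSidedExp (p + p') (q + q') x := by
  rw [twoSidedExp, twoSidedExp, twoSidedExp, ← Real.exp_add]
  ring_nf

lemma twoSidedExp_neg_self (a x : ℝ) : twoSidedExp (-a) a x = rexp (a * x) := by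
  rw [twoSidedExp]
  nth_rw 3 [← posPart_sub_negPart x]
  ring_nf

lemma twoSidedExp_self (p x : ℝ) : twoSidedExp p p x = rexp (-p * |x|) := by
  rw [twoSidedExp, ← posPart_add_negPart]
  ring_nf

lemma twoSidedExp_le_twoSidedExp {p q p' q' : ℝ} (hp : p' ≤ p) (hq : q' ≤ q) (x : ℝ) :
    twoSidedExp p q x ≤ twoSidedExp p' q' x := by
  unfold twoSidedExp
  gcongr

lemma isBigO_twoSidedExp {p q p' q' : ℝ} (hp : p' ≤ p) (hq : q' ≤ q) (l : Filter ℝ) :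
    twoSidedExp p q =O[l] twoSidedExp p' q' :=
  .of_norm_le fun x ↦ by
    rw [norm_twoSidedExp]
    exact twoSidedExp_le_twoSidedExp hp hq x

lemma twoSidedExp_add_isBigO (p q c : ℝ) :
    (fun x ↦ twoSidedExp p q (x + c)) =O[⊤] twoSidedExp p q := by
  refine .of_bound (rexp (|p| * |c| + |q| * |c|)) (.of_forall fun x ↦ ?_)
  rw [norm_twoSidedExp, norm_twoSidedExp, twoSidedExp, twoSidedExp, ← Real.exp_add]
  have hpos : |x⁺ - (x + c)⁺| ≤ |c| := by
    simpa [posPart_def] using abs_max_sub_max_le_abs x (x + c) 0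
  have hneg : |x⁻ - (x + c)⁻| ≤ |c| := by
    simpa [negPart_def] using abs_max_sub_max_le_abs (-x) (-(x + c)) 0
  have hp : p * (x⁺ - (x + c)⁺) ≤ |p| * |c| :=
    (le_abs_self _).trans (by rw [abs_mul]; gcongr)
  have hq : q * (x⁻ - (x + c)⁻) ≤ |q| * |c| :=
    (le_abs_self _).trans (by rw [abs_mul]; gcongr)
  gcongr
  linarith

lemma integrable_twoSidedExp {p q : ℝ} (hp : 0 < p) (hq : 0 < q) :
    Integrable (twoSidedExp p q) := by
  rw [← integrableOn_univ, ← Set.Iic_union_Ioi (a := (0 : ℝ)), integrableOn_union]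
  constructor
  · refine (integrableOn_exp_mul_Iic hq 0).congr_fun (fun x hx ↦ ?_) measurableSet_Iic
    simp [twoSidedExp, posPart_eq_zero.2 (Set.mem_Iic.1 hx), negPart_eq_neg.2 (Set.mem_Iic.1 hx)]
  · refine (integrableOn_exp_mul_Ioi (neg_lt_zero.2 hp) 0).congr_fun (fun x hx ↦ ?_)
      measurableSet_Ioi
    simp [twoSidedExp, posPart_eq_self.2 (Set.mem_Ioi.1 hx).le,
      negPart_eq_zero.2 (Set.mem_Ioi.1 hx).le]

end TwoSidedExp

section Strip

/-- The filter of points of the closed strip `α ≤ Im w ≤ β` with `|Re w| → ∞`. -/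
def stripEnds (α β : ℝ) : Filter ℂ := comap (fun w ↦ |w.re|) atTop ⊓ 𝓟 (im ⁻¹' Set.Icc α β)

lemma tendsto_re_stripEnds (α β : ℝ) : Tendsto re (stripEnds α β) (cocompact ℝ) := by
  rw [cocompact_eq_atBot_atTop, ← comap_abs_atTop, tendsto_comap_iff]
  exact tendsto_comap.mono_left inf_le_left

lemma eventually_stripEnds {α β : ℝ} {P : ℂ → Prop} : (∀ᶠ w in stripEnds α β, P w) ↔
    ∃ T, ∀ w : ℂ, w.im ∈ Set.Icc α β → T ≤ |w.re| → P w := by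
  rw [stripEnds, eventually_inf_principal, eventually_comap, eventually_atTop]
  exact ⟨fun ⟨T, h⟩ ↦ ⟨T, fun w hw hT ↦ h _ hT w rfl hw⟩,
    fun ⟨T, h⟩ ↦ ⟨T, fun _ hr w hw him ↦ h w him (hw ▸ hr)⟩⟩

lemma tendsto_line_stripEnds {α β s : ℝ} (hs : s ∈ Set.Icc α β) :
    Tendsto (fun t : ℝ ↦ (t + s * I : ℂ)) (cocompact ℝ) (stripEnds α β) := by
  refine tendsto_inf.2 ⟨?_, tendsto_principal.2 (.of_forall fun t ↦ by simpa using hs)⟩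
  rw [tendsto_comap_iff, cocompact_eq_atBot_atTop, ← comap_abs_atTop]
  simpa [Function.comp_def] using ⟨tendsto_abs_atBot_atTop, tendsto_abs_atTop_atTop⟩

lemma isBigO_line_of_isBigO_stripEnds {f : ℂ → ℂ} {g : ℝ → ℝ} {α β s : ℝ}
    (hs : s ∈ Set.Icc α β) (hf : f =O[stripEnds α β] fun w ↦ g w.re) :
    (fun t : ℝ ↦ f (t + s * I)) =O[cocompact ℝ] g := by
  simpa [Function.comp_def] using hf.comp_tendsto (tendsto_line_stripEnds hs)

lemma isBigO_line_of_isBigO_strip {f : ℂ → ℂ} {g : ℝ → ℝ} {α β s : ℝ}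
    (hs : s ∈ Set.Icc α β) (hf : f =O[𝓟 (im ⁻¹' Set.Icc α β)] fun w ↦ g w.re) :
    (fun t : ℝ ↦ f (t + s * I)) =O[⊤] g := by
  have hline : Tendsto (fun t : ℝ ↦ (t + s * I : ℂ)) ⊤ (𝓟 (im ⁻¹' Set.Icc α β)) :=
    tendsto_principal.2 (.of_forall fun t ↦ by simpa using hs)
  simpa [Function.comp_def] using hf.comp_tendsto hline

lemma isBigO_top_of_isBigO_cocompact {X : Type*} [TopologicalSpace X] {f : X → ℂ} {g : X → ℝ}
    (hf : Continuous f) (hg : Continuous g) (hg0 : ∀ x, 0 < g x) (h : f =O[cocompact X] g) :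
    f =O[⊤] g := by
  obtain ⟨C, hC⟩ := h.bound
  obtain ⟨K, hK, hKC⟩ := mem_cocompact.1 hC
  have hquot : Continuous fun x ↦ ‖f x‖ / g x := hf.norm.div hg fun x ↦ (hg0 x).ne'
  obtain ⟨M, hM⟩ := hK.exists_bound_of_continuousOn hquot.continuousOn
  refine isBigO_top.2 ⟨max C M, fun x ↦ ?_⟩
  rw [Real.norm_of_nonneg (hg0 x).le]
  by_cases hx : x ∈ K
  · have hx' := (le_abs_self _).trans ((hM x hx).trans (le_max_right C M))
    rwa [div_le_iff₀ (hg0 x)] at hx'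
  · have hx' : ‖f x‖ ≤ C * ‖g x‖ := hKC hx
    rw [Real.norm_of_nonneg (hg0 x).le] at hx'
    exact hx'.trans (by gcongr; exacts [(hg0 x).le, le_max_left C M])

lemma continuous_line_of_continuousOn {f : ℂ → ℂ} {S : Set ℝ} (hf : ContinuousOn f (im ⁻¹' S))
    {s : ℝ} (hs : s ∈ S) : Continuous fun t : ℝ ↦ f (t + s * I) :=
  hf.comp_continuous (by fun_prop) fun t ↦ by simpa using hs

lemma integrable_of_isBigO_twoSidedExp {f : ℝ → ℂ} (hf : Continuous f) {p q : ℝ} (hp : 0 < p)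
    (hq : 0 < q) (h : f =O[cocompact ℝ] twoSidedExp p q) : Integrable f :=
  hf.locallyIntegrable.integrable_of_isBigO_cocompact h
    ((integrable_twoSidedExp hp hq).integrableAtFilter _)

end Strip

section Contour

/-- The integral of `f` along the horizontal line `Im w = s`. -/
def lineIntegral (f : ℂ → ℂ) (s : ℝ) : ℂ := ∫ t : ℝ, f (t + s * I)

/-- The part of the line integral over `|Re w| ≤ T`; along a contour with a pole `1/w` it may have a
limit although the line integral diverges. -/
def truncLineIntegral (f : ℂ → ℂ) (s T : ℝ) : ℂ := ∫ t in -T..T, f (t + s * I)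

lemma tendsto_truncLineIntegral {f : ℂ → ℂ} {s : ℝ}
    (hf : Integrable fun t : ℝ ↦ f (t + s * I)) :
    Tendsto (truncLineIntegral f s) atTop (𝓝 (lineIntegral f s)) :=
  intervalIntegral_tendsto_integral hf tendsto_neg_atTop_atBot tendsto_id

lemma truncLineIntegral_add {f g : ℂ → ℂ} {s : ℝ} (hf : Continuous fun t : ℝ ↦ f (t + s * I))
    (hg : Continuous fun t : ℝ ↦ g (t + s * I)) (T : ℝ) :
    truncLineIntegral (fun w ↦ f w + g w) s T =
      truncLineIntegral f s T + truncLineIntegral g s T :=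
  intervalIntegral.integral_add (hf.intervalIntegrable _ _) (hg.intervalIntegrable _ _)

lemma tendsto_verticalIntegral {g : ℂ → ℂ} {α β : ℝ} (hαβ : α ≤ β)
    (hg0 : Tendsto g (stripEnds α β) (𝓝 0)) :
    Tendsto (fun T : ℝ ↦ ∫ y in α..β, g (T + y * I)) (cocompact ℝ) (𝓝 0) := by
  rw [NormedAddGroup.tendsto_nhds_zero]
  intro ε hε
  have hδ : 0 < ε / (β - α + 1) := div_pos hε (by linarith)
  obtain ⟨T₀, hT₀⟩ := eventually_stripEnds.1 (NormedAddGroup.tendsto_nhds_zero.1 hg0 _ hδ)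
  have hfar : ∀ᶠ T : ℝ in cocompact ℝ, T₀ ≤ |T| := by
    rw [cocompact_eq_atBot_atTop, ← comap_abs_atTop]
    exact tendsto_comap.eventually_ge_atTop T₀
  filter_upwards [hfar] with T hT
  have hbound : ∀ y ∈ Set.uIoc α β, ‖g (T + y * I)‖ ≤ ε / (β - α + 1) := fun y hy ↦ by
    rw [Set.uIoc_of_le hαβ] at hy
    exact (hT₀ _ (by simpa using ⟨hy.1.le, hy.2⟩) (by simpa using hT)).le
  calc ‖∫ y in α..β, g (T + y * I)‖ ≤ ε / (β - α + 1) * |β - α| :=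
        intervalIntegral.norm_integral_le_of_norm_le_const hbound
    _ < ε / (β - α + 1) * (β - α + 1) := by
        rw [abs_of_nonneg (sub_nonneg.2 hαβ)]
        gcongr
        linarith
    _ = ε := div_mul_cancel₀ _ (by linarith)

lemma tendsto_truncLineIntegral_sub {g : ℂ → ℂ} {α β : ℝ} (hαβ : α ≤ β)
    (hg : DifferentiableOn ℂ g (im ⁻¹' Set.Icc α β)) (hg0 : Tendsto g (stripEnds α β) (𝓝 0)) :
    Tendsto (fun T ↦ truncLineIntegral g α T - truncLineIntegral g β T) atTop (𝓝 0) := by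
  have hright := (tendsto_verticalIntegral hαβ hg0).mono_left atTop_le_cocompact
  have hleft := ((tendsto_verticalIntegral hαβ hg0).mono_left atBot_le_cocompact).comp
    tendsto_neg_atTop_atBot
  have hsides := (hleft.sub hright).const_smul I
  rw [sub_zero, smul_zero] at hsides
  refine hsides.congr fun T ↦ ?_
  have hrect := integral_boundary_rect_eq_zero_of_differentiableOn g (-T + α * I) (T + β * I)
    (hg.mono fun w hw ↦ by simpa [Set.uIcc_of_le hαβ] using hw.2)
  simp only [add_re, add_im, neg_re, neg_im, ofReal_re, ofReal_im, re_ofReal_mul, im_ofReal_mul,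
    I_re, I_im, mul_zero, mul_one, add_zero, zero_add, neg_zero] at hrect
  simp only [truncLineIntegral, Function.comp_apply, smul_sub]
  linear_combination -hrect

lemma isBigO_twoSidedExp_tendsto_zero {g : ℂ → ℂ} {α β p q : ℝ} (hp : 0 < p) (hq : 0 < q)
    (hg : g =O[stripEnds α β] fun w ↦ twoSidedExp p q w.re) :
    Tendsto g (stripEnds α β) (𝓝 0) := by
  have hmin : 0 < min p q := lt_min hp hq
  have hexp : Tendsto (fun x : ℝ ↦ rexp (-min p q * |x|)) (cocompact ℝ) (𝓝 0) := by
    rw [cocompact_eq_atBot_atTop, ← comap_abs_atTop]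
    exact Real.tendsto_exp_atBot.comp
      (tendsto_comap.const_mul_atTop_of_neg (neg_lt_zero.2 hmin))
  simp only [← twoSidedExp_self] at hexp
  refine (hg.trans ?_).trans_tendsto (hexp.comp (tendsto_re_stripEnds α β))
  exact (isBigO_twoSidedExp (min_le_left p q) (min_le_right p q) _).comp_tendsto
    (tendsto_re_stripEnds α β)

theorem lineIntegral_eq_of_differentiableOn {g : ℂ → ℂ} {α β p q : ℝ} (hαβ : α ≤ β)
    (hg : DifferentiableOn ℂ g (im ⁻¹' Set.Icc α β)) (hp : 0 < p) (hq : 0 < q)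
    (hdecay : g =O[stripEnds α β] fun w ↦ twoSidedExp p q w.re) :
    lineIntegral g α = lineIntegral g β := by
  have hint : ∀ s ∈ Set.Icc α β, Integrable fun t : ℝ ↦ g (t + s * I) := fun s hs ↦
    integrable_of_isBigO_twoSidedExp (continuous_line_of_continuousOn hg.continuousOn hs) hp hq
      (isBigO_line_of_isBigO_stripEnds hs hdecay)
  have hα := tendsto_truncLineIntegral (hint α (Set.left_mem_Icc.2 hαβ))
  have hβ := tendsto_truncLineIntegral (hint β (Set.right_mem_Icc.2 hαβ))
  exact sub_eq_zero.1 (tendsto_nhds_unique (hα.sub hβ) (tendsto_truncLineIntegral_sub hαβ hg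
    (isBigO_twoSidedExp_tendsto_zero hp hq hdecay)))

end Contour

section Residue

lemma add_mul_I_mem_slitPlane {a : ℝ} (ha : a ≠ 0) (t : ℝ) : (t + a * I : ℂ) ∈ slitPlane :=
  mem_slitPlane_iff.2 (.inr (by simpa using ha))

lemma add_mul_I_ne_zero {a : ℝ} (ha : a ≠ 0) (t : ℝ) : (t + a * I : ℂ) ≠ 0 :=
  slitPlane_ne_zero (add_mul_I_mem_slitPlane ha t)

lemma continuous_div_pow_line {h : ℂ → ℂ} {a : ℝ} (ha : a ≠ 0)
    (hh : Continuous fun t : ℝ ↦ h (t + a * I)) (n : ℕ) :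
    Continuous fun t : ℝ ↦ h (t + a * I) / (t + a * I : ℂ) ^ n :=
  hh.div (by fun_prop) fun t ↦ pow_ne_zero _ (add_mul_I_ne_zero ha t)

lemma hasDerivAt_comp_line {f : ℂ → ℂ} {f' : ℂ} {a t : ℝ} (hf : HasDerivAt f f' (t + a * I)) :
    HasDerivAt (fun t : ℝ ↦ f (t + a * I)) f' t :=
  (hf.comp_add_const (t : ℂ) (a * I)).comp_ofReal

lemma truncLineIntegral_inv {a T : ℝ} (ha : a ≠ 0) (hT : 0 < T) :
    truncLineIntegral (fun w ↦ w⁻¹) a T =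
      Complex.log (1 + (a / T : ℝ) * I) - Complex.log (-1 + (a / T : ℝ) * I) := by
  have hderiv (t : ℝ) : HasDerivAt (fun t : ℝ ↦ Complex.log (t + a * I)) (t + a * I : ℂ)⁻¹ t :=
    hasDerivAt_comp_line (hasDerivAt_log (add_mul_I_mem_slitPlane ha t))
  have hcont : Continuous fun t : ℝ ↦ (t + a * I : ℂ)⁻¹ :=
    Continuous.inv₀ (by fun_prop) fun t ↦ add_mul_I_ne_zero ha t
  have hscale {c : ℝ} (_ : c ≠ 0) : Complex.log ((T * c : ℝ) + a * I) =
      Real.log T + Complex.log (c + (a / T : ℝ) * I) := by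
    rw [← Complex.log_ofReal_mul hT (add_mul_I_ne_zero (div_ne_zero ha hT.ne') c)]
    have hT' : (T : ℂ) ≠ 0 := by exact_mod_cast hT.ne'
    push_cast
    field_simp
  have hplus := hscale one_ne_zero
  have hminus := hscale (neg_ne_zero.2 one_ne_zero)
  rw [truncLineIntegral, intervalIntegral.integral_eq_sub_of_hasDerivAt (fun t _ ↦ hderiv t)
    (hcont.intervalIntegrable _ _)]
  push_cast at hplus hminus ⊢
  rw [mul_one] at hplus
  rw [mul_neg_one] at hminus
  rw [hplus, hminus]
  ring

lemma tendsto_mul_I_nhdsWithin {a : ℝ} {S : Set ℂ} (c : ℂ)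
    (hS : ∀ T : ℝ, 0 < T → c + (a / T : ℝ) * I ∈ S) :
    Tendsto (fun T : ℝ ↦ c + (a / T : ℝ) * I) atTop (𝓝[S] c) := by
  refine tendsto_nhdsWithin_iff.2 ⟨?_, (eventually_gt_atTop 0).mono hS⟩
  have hdiv : Tendsto (fun T : ℝ ↦ ((a / T : ℝ) : ℂ)) atTop (𝓝 0) := by
    exact_mod_cast (continuous_ofReal.tendsto 0).comp (tendsto_const_nhds.div_atTop tendsto_id)
  simpa using (hdiv.mul_const I).const_add c

lemma tendsto_log_one_add_mul_I (a : ℝ) :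
    Tendsto (fun T : ℝ ↦ Complex.log (1 + (a / T : ℝ) * I)) atTop (𝓝 0) := by
  have hline := tendsto_mul_I_nhdsWithin (a := a) 1 fun _ _ ↦ Set.mem_univ _
  rw [nhdsWithin_univ] at hline
  rw [← Complex.log_one]
  exact (continuousAt_clog one_mem_slitPlane).tendsto.comp hline

lemma tendsto_truncLineIntegral_inv_of_neg {a : ℝ} (ha : a < 0) :
    Tendsto (truncLineIntegral (fun w ↦ w⁻¹) a) atTop (𝓝 (π * I)) := by
  have hlog := (tendsto_log_nhdsWithin_im_neg_of_re_neg_of_im_zero (z := -1) (by simp)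
    (by simp)).comp (tendsto_mul_I_nhdsWithin (a := a) (-1) fun T hT ↦ by
      simpa using div_neg_of_neg_of_pos ha hT)
  have hlim := (tendsto_log_one_add_mul_I a).sub hlog
  simp only [norm_neg, norm_one, Real.log_one, ofReal_zero, zero_sub, neg_neg] at hlim
  refine hlim.congr' ?_
  filter_upwards [eventually_gt_atTop 0] with T hT
  exact (truncLineIntegral_inv ha.ne hT).symm

lemma tendsto_truncLineIntegral_inv_of_pos {a : ℝ} (ha : 0 < a) :
    Tendsto (truncLineIntegral (fun w ↦ w⁻¹) a) atTop (𝓝 (-(π * I))) := by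
  have hlog := (tendsto_log_nhdsWithin_im_nonneg_of_re_neg_of_im_zero (z := -1) (by simp)
    (by simp)).comp (tendsto_mul_I_nhdsWithin (a := a) (-1) fun T hT ↦ by
      simpa using (div_pos ha hT).le)
  have hlim := (tendsto_log_one_add_mul_I a).sub hlog
  simp only [norm_neg, norm_one, Real.log_one, ofReal_zero, zero_add, zero_sub] at hlim
  refine hlim.congr' ?_
  filter_upwards [eventually_gt_atTop 0] with T hT
  exact (truncLineIntegral_inv ha.ne' hT).symm

lemma tendsto_line_cobounded (a : ℝ) :
    Tendsto (fun t : ℝ ↦ (t + a * I : ℂ)) (cocompact ℝ) (Bornology.cobounded ℂ) := by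
  refine tendsto_norm_atTop_iff_cobounded.1 (tendsto_atTop_mono (fun t ↦ ?_)
    tendsto_norm_cocompact_atTop)
  simpa using abs_re_le_norm (t + a * I)

lemma tendsto_truncLineIntegral_inv_pow {a : ℝ} (ha : a ≠ 0) (n : ℕ) :
    Tendsto (truncLineIntegral (fun w ↦ (w ^ (n + 2))⁻¹) a) atTop (𝓝 0) := by
  have hn : (n : ℂ) + 1 ≠ 0 := by exact_mod_cast n.succ_ne_zero
  set G : ℂ → ℂ := fun w ↦ -((n : ℂ) + 1)⁻¹ * (w ^ (n + 1))⁻¹ with hG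
  have hderiv (t : ℝ) : HasDerivAt (fun t : ℝ ↦ G (t + a * I)) ((t + a * I : ℂ) ^ (n + 2))⁻¹ t := by
    have hne := add_mul_I_ne_zero ha t
    refine hasDerivAt_comp_line (f := G) ((((hasDerivAt_pow (n + 1) (t + a * I : ℂ)).fun_inv
      (pow_ne_zero _ hne)).const_mul _).congr_deriv ?_)
    rw [Nat.add_sub_cancel]
    push_cast
    field_simp
    ring
  have hcont : Continuous fun t : ℝ ↦ ((t + a * I : ℂ) ^ (n + 2))⁻¹ :=
    Continuous.inv₀ (by fun_prop) fun t ↦ pow_ne_zero _ (add_mul_I_ne_zero ha t)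
  have hG0 : Tendsto (fun t : ℝ ↦ G (t + a * I)) (cocompact ℝ) (𝓝 0) := by
    simpa [hG] using ((tendsto_inv₀_cobounded.comp
      (tendsto_pow_cobounded_cobounded n.succ_ne_zero)).comp
      (tendsto_line_cobounded a)).const_mul (-((n : ℂ) + 1)⁻¹)
  have hright := hG0.mono_left atTop_le_cocompact
  have hleft := (hG0.mono_left atBot_le_cocompact).comp tendsto_neg_atTop_atBot
  refine (sub_zero (0 : ℂ) ▸ hright.sub hleft).congr fun T ↦ ?_
  exact (intervalIntegral.integral_eq_sub_of_hasDerivAt (fun t _ ↦ hderiv t)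
    (hcont.intervalIntegrable _ _)).symm

/-- The `n`-th Taylor coefficient at `0`, by repeated division: it is meaningful for functions that
are merely holomorphic near `0`. -/
def taylorCoeff (h : ℂ → ℂ) (n : ℕ) : ℂ := (Function.swap dslope 0)^[n] h 0

lemma taylorCoeff_eq {h : ℂ → ℂ} (hh : AnalyticAt ℂ h 0) (n : ℕ) :
    taylorCoeff h n = iteratedDeriv n h 0 / n.factorial := by
  have hseries := (hh.hasFPowerSeriesAt.has_fpower_series_iterate_dslope_fslope n).coeff_zero 1
  have hcoeff := FormalMultilinearSeries.coeff_iterate_fslope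
    (p := .ofScalars ℂ fun n ↦ iteratedDeriv n h 0 / n.factorial) n 0
  rw [FormalMultilinearSeries.coeff] at hcoeff
  rw [taylorCoeff, ← hseries]
  rw [zero_add, FormalMultilinearSeries.coeff_ofScalars] at hcoeff
  exact hcoeff

lemma eq_add_mul_dslope (h : ℂ → ℂ) (w : ℂ) : h w = h 0 + w * dslope h 0 w := by
  have := sub_smul_dslope h 0 w
  rw [sub_zero, smul_eq_mul] at this
  rw [this]
  ring

lemma div_pow_succ_eq_add_dslope (h : ℂ → ℂ) {w : ℂ} (hw : w ≠ 0) (n : ℕ) :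
    h w / w ^ (n + 1) = h 0 * (w ^ (n + 1))⁻¹ + dslope h 0 w / w ^ n := by
  rw [eq_add_mul_dslope h w]
  field_simp
  ring

lemma truncLineIntegral_const_mul (c : ℂ) (f : ℂ → ℂ) (s T : ℝ) :
    truncLineIntegral (fun w ↦ c * f w) s T = c * truncLineIntegral f s T :=
  intervalIntegral.integral_const_mul c _

lemma truncLineIntegral_div_pow_succ {h : ℂ → ℂ} {S : Set ℝ} {a : ℝ}
    (hh : ContinuousOn (dslope h 0) (im ⁻¹' S)) (ha : a ∈ S) (ha0 : a ≠ 0) (n : ℕ) (T : ℝ) :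
    truncLineIntegral (fun w ↦ h w / w ^ (n + 1)) a T =
      h 0 * truncLineIntegral (fun w ↦ (w ^ (n + 1))⁻¹) a T +
        truncLineIntegral (fun w ↦ dslope h 0 w / w ^ n) a T := by
  rw [← truncLineIntegral_const_mul, ← truncLineIntegral_add]
  · exact intervalIntegral.integral_congr fun t _ ↦
      div_pow_succ_eq_add_dslope h (add_mul_I_ne_zero ha0 t) n
  · exact continuous_const.mul (Continuous.inv₀ (by fun_prop) fun t ↦
      pow_ne_zero _ (add_mul_I_ne_zero ha0 t))
  · exact continuous_div_pow_line ha0 (continuous_line_of_continuousOn hh ha) n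

lemma tendsto_inv_pow_stripEnds (α β : ℝ) (n : ℕ) :
    Tendsto (fun w : ℂ ↦ (w ^ (n + 1))⁻¹) (stripEnds α β) (𝓝 0) := by
  refine (tendsto_inv₀_cobounded.comp (tendsto_pow_cobounded_cobounded n.succ_ne_zero)).comp ?_
  exact tendsto_norm_atTop_iff_cobounded.1 (tendsto_atTop_mono abs_re_le_norm
    (tendsto_comap.mono_left inf_le_left))

lemma tendsto_dslope_div_pow {h : ℂ → ℂ} {α β : ℝ} {n : ℕ}
    (hdecay : Tendsto (fun w ↦ h w / w ^ (n + 1)) (stripEnds α β) (𝓝 0)) :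
    Tendsto (fun w ↦ dslope h 0 w / w ^ n) (stripEnds α β) (𝓝 0) := by
  have hlim := hdecay.sub ((tendsto_inv_pow_stripEnds α β n).const_mul (h 0))
  rw [mul_zero, sub_zero] at hlim
  refine hlim.congr' (eventually_stripEnds.2 ⟨1, fun w _ hw ↦ ?_⟩)
  have hw0 : w ≠ 0 := by
    rintro rfl
    norm_num at hw
  rw [div_pow_succ_eq_add_dslope h hw0, add_sub_cancel_left]

lemma strip_mem_nhds_zero {α β : ℝ} (hα : α < 0) (hβ : 0 < β) :
    im ⁻¹' Set.Icc α β ∈ 𝓝 (0 : ℂ) :=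
  continuous_im.continuousAt.preimage_mem_nhds (by simpa using Icc_mem_nhds hα hβ)

lemma tendsto_truncLineIntegral_div_pow_succ {h : ℂ → ℂ} {α β : ℝ} (hα : α < 0) (hβ : 0 < β)
    (hslope : ContinuousOn (dslope h 0) (im ⁻¹' Set.Icc α β)) {n : ℕ} {A B R : ℂ}
    (hA : Tendsto (truncLineIntegral (fun w ↦ (w ^ (n + 1))⁻¹) α) atTop (𝓝 A))
    (hB : Tendsto (truncLineIntegral (fun w ↦ (w ^ (n + 1))⁻¹) β) atTop (𝓝 B))
    (hR : Tendsto (fun T ↦ truncLineIntegral (fun w ↦ dslope h 0 w / w ^ n) α T -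
      truncLineIntegral (fun w ↦ dslope h 0 w / w ^ n) β T) atTop (𝓝 R)) :
    Tendsto (fun T ↦ truncLineIntegral (fun w ↦ h w / w ^ (n + 1)) α T -
      truncLineIntegral (fun w ↦ h w / w ^ (n + 1)) β T) atTop (𝓝 (h 0 * (A - B) + R)) := by
  have hαβ := (hα.trans hβ).le
  refine (((hA.sub hB).const_mul (h 0)).add hR).congr fun T ↦ ?_
  rw [truncLineIntegral_div_pow_succ hslope (Set.left_mem_Icc.2 hαβ) hα.ne,
    truncLineIntegral_div_pow_succ hslope (Set.right_mem_Icc.2 hαβ) hβ.ne']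
  ring

theorem tendsto_truncLineIntegral_residue {h : ℂ → ℂ} {α β : ℝ} (hα : α < 0) (hβ : 0 < β)
    (hh : DifferentiableOn ℂ h (im ⁻¹' Set.Icc α β)) (n : ℕ)
    (hdecay : Tendsto (fun w ↦ h w / w ^ (n + 1)) (stripEnds α β) (𝓝 0)) :
    Tendsto (fun T ↦ truncLineIntegral (fun w ↦ h w / w ^ (n + 1)) α T -
      truncLineIntegral (fun w ↦ h w / w ^ (n + 1)) β T) atTop
      (𝓝 (2 * π * I * taylorCoeff h n)) := by
  induction n generalizing h with
  | zero =>
    have hslope := (differentiableOn_dslope (strip_mem_nhds_zero hα hβ)).2 hh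
    have hrest := tendsto_truncLineIntegral_sub (g := fun w ↦ dslope h 0 w / w ^ 0)
      (hα.trans hβ).le (by simpa using hslope) (tendsto_dslope_div_pow hdecay)
    convert tendsto_truncLineIntegral_div_pow_succ hα hβ hslope.continuousOn (n := 0)
      (by simpa using tendsto_truncLineIntegral_inv_of_neg hα)
      (by simpa using tendsto_truncLineIntegral_inv_of_pos hβ) hrest using 2
    simp only [taylorCoeff, Function.iterate_zero, id]
    ring
  | succ n ih =>
    have hslope := (differentiableOn_dslope (strip_mem_nhds_zero hα hβ)).2 hh
    convert tendsto_truncLineIntegral_div_pow_succ hα hβ hslope.continuousOn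
      (tendsto_truncLineIntegral_inv_pow hα.ne n) (tendsto_truncLineIntegral_inv_pow hβ.ne' n)
      (ih hslope (tendsto_dslope_div_pow hdecay)) using 2
    simp [taylorCoeff, Function.swap]

theorem lineIntegral_sub_eq_residue {h : ℂ → ℂ} {α β p q : ℝ} (hα : α < 0) (hβ : 0 < β)
    (hh : DifferentiableOn ℂ h (im ⁻¹' Set.Icc α β)) (n : ℕ) (hp : 0 < p) (hq : 0 < q)
    (hdecay : (fun w ↦ h w / w ^ (n + 1)) =O[stripEnds α β] fun w ↦ twoSidedExp p q w.re) :
    lineIntegral (fun w ↦ h w / w ^ (n + 1)) α - lineIntegral (fun w ↦ h w / w ^ (n + 1)) β =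
      2 * π * I * (iteratedDeriv n h 0 / n.factorial) := by
  have hint {s : ℝ} (hs : s ∈ Set.Icc α β) (hs0 : s ≠ 0) :=
    tendsto_truncLineIntegral (integrable_of_isBigO_twoSidedExp (continuous_div_pow_line hs0
      (continuous_line_of_continuousOn hh.continuousOn hs) (n + 1)) hp hq
      (isBigO_line_of_isBigO_stripEnds hs hdecay))
  have hαβ := (hα.trans hβ).le
  rw [← taylorCoeff_eq (hh.analyticAt (strip_mem_nhds_zero hα hβ))]
  exact tendsto_nhds_unique
    ((hint (Set.left_mem_Icc.2 hαβ) hα.ne).sub (hint (Set.right_mem_Icc.2 hαβ) hβ.ne'))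
    (tendsto_truncLineIntegral_residue hα hβ hh n (isBigO_twoSidedExp_tendsto_zero hp hq hdecay))

end Residue

section FourierLaplace

/-- The Fourier–Laplace transform of `k`, integrated along `Im w = s`. If `k` decays at the rates
`p` and `q` of `twoSidedExp`, it converges for `-q < Im z < p`. -/
def fourierLaplace (k : ℂ → ℂ) (s : ℝ) (z : ℂ) : ℂ :=
  lineIntegral (fun w ↦ cexp (-I * z * w) * k w) s

lemma norm_cexp_neg_I_mul (z w : ℂ) :
    ‖cexp (-I * z * w)‖ = rexp (w.im * z.re) * rexp (z.im * w.re) := by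
  rw [Complex.norm_exp, ← Real.exp_add]
  simp only [neg_mul, neg_re, mul_re, I_re, I_im, mul_im]
  ring_nf

lemma exp_mul_le_twoSidedExp {α β y : ℝ} (hy : y ∈ Set.Icc α β) (x : ℝ) :
    rexp (y * x) ≤ twoSidedExp (-β) α x := by
  rw [← twoSidedExp_neg_self]
  exact twoSidedExp_le_twoSidedExp (neg_le_neg hy.2) hy.1 x

lemma norm_cexp_neg_I_mul_le {α β : ℝ} {z : ℂ} (hz : z.im ∈ Set.Icc α β) (w : ℂ) :
    ‖cexp (-I * z * w)‖ ≤ rexp (w.im * z.re) * twoSidedExp (-β) α w.re := by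
  rw [norm_cexp_neg_I_mul]
  gcongr
  exact exp_mul_le_twoSidedExp hz w.re

lemma isBigO_cexp_neg_I_mul (z : ℂ) (α β : ℝ) :
    (fun w ↦ cexp (-I * z * w)) =O[𝓟 (im ⁻¹' Set.Icc α β)]
      fun w ↦ twoSidedExp (-z.im) z.im w.re := by
  refine isBigO_principal.2 ⟨rexp (max |α| |β| * |z.re|), fun w hw ↦ ?_⟩
  rw [norm_twoSidedExp]
  refine (norm_cexp_neg_I_mul_le (Set.left_mem_Icc.2 le_rfl) w).trans ?_
  gcongr rexp ?_ * _
  · exact (twoSidedExp_pos _ _ _).le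
  · calc w.im * z.re ≤ |w.im| * |z.re| := by
          rw [← abs_mul]
          exact le_abs_self _
      _ ≤ max |α| |β| * |z.re| := by
          gcongr
          exact abs_le_max_abs_abs hw.1 hw.2

lemma isBigO_cexp_mul {k : ℂ → ℂ} {l : Filter ℂ} {α β p q : ℝ} (hl : l ≤ 𝓟 (im ⁻¹' Set.Icc α β))
    (hk : k =O[l] fun w ↦ twoSidedExp p q w.re) (z : ℂ) :
    (fun w ↦ cexp (-I * z * w) * k w) =O[l] fun w ↦ twoSidedExp (p - z.im) (q + z.im) w.re := by
  refine (((isBigO_cexp_neg_I_mul z α β).mono hl).mul hk).congr_right fun w ↦ ?_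
  rw [twoSidedExp_mul]
  ring_nf

lemma norm_cexp_mul_le {k : ℂ → ℂ} {s p q C : ℝ} {α β : ℝ}
    (hk : ∀ t : ℝ, ‖k (t + s * I)‖ ≤ C * ‖twoSidedExp p q t‖) {z : ℂ} (hz : z.im ∈ Set.Icc α β)
    (t : ℝ) : ‖cexp (-I * z * (t + s * I)) * k (t + s * I)‖ ≤
      C * rexp (s * z.re) * twoSidedExp (p - β) (q + α) t := by
  have hkernel := norm_cexp_neg_I_mul_le hz (t + s * I)
  simp only [add_re, add_im, ofReal_re, ofReal_im, re_ofReal_mul, im_ofReal_mul, I_re, I_im,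
    mul_zero, mul_one, add_zero, zero_add] at hkernel
  rw [norm_mul]
  calc _ ≤ rexp (s * z.re) * twoSidedExp (-β) α t * (C * twoSidedExp p q t) := by
        rw [← norm_twoSidedExp p q]
        exact mul_le_mul hkernel (hk t) (norm_nonneg _) ((norm_nonneg _).trans hkernel)
    _ = _ := by
        rw [sub_eq_neg_add, add_comm q, ← twoSidedExp_mul]
        ring

lemma continuous_cexp_mul {k : ℂ → ℂ} {s : ℝ} (hkc : Continuous fun t : ℝ ↦ k (t + s * I)) (z : ℂ) :
    Continuous fun t : ℝ ↦ cexp (-I * z * (t + s * I)) * k (t + s * I) :=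
  Continuous.mul (by fun_prop) hkc

lemma integrable_cexp_mul {k : ℂ → ℂ} {s p q : ℝ} {z : ℂ}
    (hkc : Continuous fun t : ℝ ↦ k (t + s * I))
    (hk : (fun t : ℝ ↦ k (t + s * I)) =O[⊤] twoSidedExp p q) (hzq : -q < z.im) (hzp : z.im < p) :
    Integrable fun t : ℝ ↦ cexp (-I * z * (t + s * I)) * k (t + s * I) := by
  obtain ⟨C, hC⟩ := isBigO_top.1 hk
  refine Integrable.mono'
    ((integrable_twoSidedExp (sub_pos.2 hzp) (neg_lt_iff_pos_add'.1 hzq)).const_mul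
      (C * rexp (s * z.re))) (continuous_cexp_mul hkc z).aestronglyMeasurable
    (.of_forall (norm_cexp_mul_le hC (Set.left_mem_Icc.2 le_rfl)))

lemma fourierLaplace_isBigO {k : ℂ → ℂ} {s p q α β : ℝ}
    (hk : (fun t : ℝ ↦ k (t + s * I)) =O[⊤] twoSidedExp p q) (hα : -q < α) (hβ : β < p) :
    fourierLaplace k s =O[𝓟 (im ⁻¹' Set.Icc α β)] fun z ↦ rexp (s * z.re) := by
  obtain ⟨C, hC⟩ := isBigO_top.1 hk
  refine isBigO_principal.2 ⟨C * ∫ t, twoSidedExp (p - β) (q + α) t, fun z hz ↦ ?_⟩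
  have hint := integrable_twoSidedExp (sub_pos.2 hβ) (neg_lt_iff_pos_add'.1 hα)
  refine (norm_integral_le_of_norm_le (hint.const_mul (C * rexp (s * z.re)))
    (.of_forall (norm_cexp_mul_le hC hz))).trans_eq ?_
  rw [integral_const_mul, Real.norm_of_nonneg (Real.exp_pos _).le]
  ring

lemma line_isBigO_twoSidedExp (s : ℝ) {δ : ℝ} (hδ : 0 < δ) :
    (fun t : ℝ ↦ (t + s * I : ℂ)) =O[⊤] twoSidedExp (-δ) (-δ) := by
  refine isBigO_top.2 ⟨δ⁻¹ + |s|, fun t ↦ ?_⟩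
  rw [norm_twoSidedExp, twoSidedExp_self, neg_neg, add_mul]
  have hexp := Real.add_one_le_exp (δ * |t|)
  have hδt : 0 ≤ δ * |t| := by positivity
  calc ‖(t + s * I : ℂ)‖ ≤ |t| + |s| := by simpa using norm_add_le (t : ℂ) (s * I)
    _ = δ⁻¹ * (δ * |t|) + |s| * 1 := by rw [inv_mul_cancel_left₀ hδ.ne', mul_one]
    _ ≤ _ := by gcongr <;> linarith

lemma norm_cexp_mul_le_of_mem_ball {k : ℂ → ℂ} {s p q r C : ℝ} {y z : ℂ}
    (hk : ∀ t : ℝ, ‖k (t + s * I)‖ ≤ C * ‖twoSidedExp p q t‖) (hy : y ∈ Metric.ball z r) (t : ℝ) :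
    ‖cexp (-I * y * (t + s * I)) * k (t + s * I)‖ ≤ C * rexp (|s| * (|z.re| + r)) *
      twoSidedExp (p - (z.im + r)) (q + (z.im - r)) t := by
  have hyz := (mem_ball_iff_norm.1 hy).le
  have hre := (abs_re_le_norm (y - z)).trans hyz
  have him := abs_le.1 ((abs_im_le_norm (y - z)).trans hyz)
  rw [sub_re] at hre
  rw [sub_im] at him
  have hC : 0 ≤ C := nonneg_of_mul_nonneg_left ((norm_nonneg _).trans (hk 0))
    (norm_pos_iff.2 (twoSidedExp_pos p q 0).ne')
  have hmem : y.im ∈ Set.Icc (z.im - r) (z.im + r) := ⟨by linarith, by linarith⟩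
  refine (norm_cexp_mul_le hk hmem t).trans ?_
  gcongr C * rexp ?_ * _
  · exact (twoSidedExp_pos _ _ _).le
  · calc s * y.re ≤ |s| * |y.re| := by
          rw [← abs_mul]
          exact le_abs_self _
      _ ≤ |s| * (|z.re| + r) := by
          gcongr
          linarith [abs_sub_abs_le_abs_sub y.re z.re]

lemma hasDerivAt_fourierLaplace_of_isBigO {k : ℂ → ℂ} {s p q r p' q' : ℝ} {z : ℂ}
    (hkc : Continuous fun t : ℝ ↦ k (t + s * I))
    (hk : (fun t : ℝ ↦ k (t + s * I)) =O[⊤] twoSidedExp p q) (hzq : -q < z.im) (hzp : z.im < p)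
    (hk' : (fun t : ℝ ↦ (-I * (t + s * I)) * k (t + s * I)) =O[⊤] twoSidedExp p' q')
    (hr : 0 < r) (hzq' : -q' < z.im - r) (hzp' : z.im + r < p') :
    HasDerivAt (fourierLaplace k s) (fourierLaplace (fun w ↦ -I * w * k w) s z) z := by
  obtain ⟨C, hC⟩ := isBigO_top.1 hk'
  have hint := integrable_twoSidedExp (sub_pos.2 hzp') (neg_lt_iff_pos_add'.1 hzq')
  refine (hasDerivAt_integral_of_dominated_loc_of_deriv_le (Metric.ball_mem_nhds z hr)
    (F := fun y (t : ℝ) ↦ cexp (-I * y * (t + s * I)) * k (t + s * I))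
    (F' := fun y (t : ℝ) ↦ cexp (-I * y * (t + s * I)) * (-I * (t + s * I) * k (t + s * I)))
    (.of_forall fun y ↦ (continuous_cexp_mul hkc y).aestronglyMeasurable)
    (integrable_cexp_mul hkc hk hzq hzp)
    (continuous_cexp_mul (k := fun w ↦ -I * w * k w) (.mul (by fun_prop) hkc)
      z).aestronglyMeasurable
    (.of_forall fun t y hy ↦ norm_cexp_mul_le_of_mem_ball (k := fun w ↦ -I * w * k w) hC hy t)
    (hint.const_mul _) (.of_forall fun t y _ ↦ ?_)).2
  have hlin : HasDerivAt (fun y : ℂ ↦ -I * y * (t + s * I)) (-I * (t + s * I)) y := by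
    simpa using ((hasDerivAt_id y).const_mul (-I)).mul_const (t + s * I : ℂ)
  exact (hlin.cexp.mul_const _).congr_deriv (by ring)

theorem hasDerivAt_fourierLaplace {k : ℂ → ℂ} {s p q : ℝ} {z : ℂ}
    (hkc : Continuous fun t : ℝ ↦ k (t + s * I))
    (hk : (fun t : ℝ ↦ k (t + s * I)) =O[⊤] twoSidedExp p q) (hzq : -q < z.im) (hzp : z.im < p) :
    HasDerivAt (fourierLaplace k s) (fourierLaplace (fun w ↦ -I * w * k w) s z) z := by
  obtain ⟨δ, hδ, hδmin⟩ := exists_between (lt_min (sub_pos.2 hzp) (neg_lt_iff_pos_add'.1 hzq))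
  obtain ⟨hδp, hδq⟩ := lt_min_iff.1 hδmin
  have hk' : (fun t : ℝ ↦ (-I * (t + s * I)) * k (t + s * I)) =O[⊤]
      twoSidedExp (-(δ / 2) + p) (-(δ / 2) + q) :=
    (((line_isBigO_twoSidedExp s (half_pos hδ)).const_mul_left (-I)).mul hk).congr_right
      fun t ↦ twoSidedExp_mul ..
  exact hasDerivAt_fourierLaplace_of_isBigO hkc hk hzq hzp hk' (half_pos hδ) (by linarith)
    (by linarith)

theorem fourierLaplace_eq_of_differentiableOn {k : ℂ → ℂ} {α β p q : ℝ} {z : ℂ} (hαβ : α ≤ β)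
    (hkd : DifferentiableOn ℂ k (im ⁻¹' Set.Icc α β))
    (hk : k =O[stripEnds α β] fun w ↦ twoSidedExp p q w.re) (hzq : -q < z.im) (hzp : z.im < p) :
    fourierLaplace k α z = fourierLaplace k β z :=
  lineIntegral_eq_of_differentiableOn hαβ
    (((differentiable_id.const_mul (-I * z)).cexp.differentiableOn).mul hkd) (sub_pos.2 hzp)
    (neg_lt_iff_pos_add'.1 hzq) (isBigO_cexp_mul inf_le_right hk z)

end FourierLaplace

section Abelian

lemma twoSidedExp_div (p q x : ℝ) {η : ℝ} (hη : 0 < η) :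
    twoSidedExp p q (x / η) = twoSidedExp (p / η) (q / η) x := by
  have hpos : (x / η)⁺ = x⁺ / η := by
    rw [posPart_def, posPart_def, ← max_div_div_right hη.le, zero_div]
  have hneg : (x / η)⁻ = x⁻ / η := by
    rw [negPart_def, negPart_def, ← max_div_div_right hη.le, zero_div, neg_div]
  rw [twoSidedExp, twoSidedExp, hpos, hneg]
  ring_nf

lemma exp_mul_twoSidedExp_div_le {p η : ℝ} (hη : 0 < η) (hηp : 2 * η ≤ p) (x : ℝ) :
    rexp x * twoSidedExp p 0 (x / η) ≤ twoSidedExp 1 1 x := by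
  have hpη : 2 ≤ p / η := (le_div_iff₀ hη).2 hηp
  calc rexp x * twoSidedExp p 0 (x / η) = twoSidedExp (-1 + p / η) (1 + 0 / η) x := by
        rw [twoSidedExp_div p 0 x hη, ← twoSidedExp_mul, twoSidedExp_neg_self, one_mul]
    _ ≤ twoSidedExp 1 1 x := twoSidedExp_le_twoSidedExp (by linarith) (by simp) x

lemma tendsto_twoSidedExp_atTop {p : ℝ} (hp : 0 < p) (q : ℝ) :
    Tendsto (twoSidedExp p q) atTop (𝓝 0) := by
  refine (Real.tendsto_exp_atBot.comp
    (tendsto_id.const_mul_atTop_of_neg (neg_lt_zero.2 hp))).congr' ?_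
  filter_upwards [eventually_ge_atTop 0] with x hx
  simp [twoSidedExp, posPart_eq_self.2 hx, negPart_eq_zero.2 hx]

lemma tendsto_exp_mul_comp_div {k : ℝ → ℂ} {p : ℝ} {l : ℂ} (hp : 0 < p)
    (hk : k =O[⊤] twoSidedExp p 0) (hlim : Tendsto k atBot (𝓝 l)) {x : ℝ} (hx : x ≠ 0) :
    Tendsto (fun η : ℝ ↦ cexp x * k (x / η)) (𝓝[>] 0)
      (𝓝 ((Set.Iic 0).indicator (fun x : ℝ ↦ cexp x * l) x)) := by
  simp only [div_eq_mul_inv]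
  rcases hx.lt_or_gt with hx | hx
  · rw [Set.indicator_of_mem (Set.mem_Iic.2 hx.le)]
    exact (hlim.comp (tendsto_inv_nhdsGT_zero.const_mul_atTop_of_neg hx)).const_mul _
  · rw [Set.indicator_of_notMem (Set.notMem_Iic.2 hx), ← mul_zero (cexp x)]
    have hzero : Tendsto k atTop (𝓝 0) :=
      (hk.mono le_top).trans_tendsto (tendsto_twoSidedExp_atTop hp 0)
    exact (hzero.comp (tendsto_inv_nhdsGT_zero.const_mul_atTop hx)).const_mul _

lemma tendsto_integral_exp_mul_comp_div {k : ℝ → ℂ} {p : ℝ} {l : ℂ} (hp : 0 < p)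
    (hkc : Continuous k) (hk : k =O[⊤] twoSidedExp p 0) (hlim : Tendsto k atBot (𝓝 l)) :
    Tendsto (fun η : ℝ ↦ ∫ x : ℝ, cexp x * k (x / η)) (𝓝[>] 0) (𝓝 l) := by
  obtain ⟨C, hC⟩ := isBigO_top.1 hk
  have hvalue : ∫ x, (Set.Iic 0).indicator (fun x : ℝ ↦ cexp x * l) x = l := by
    have hexp := integral_exp_mul_complex_Iic (a := 1) (by simp) 0
    rw [integral_indicator measurableSet_Iic, integral_mul_const]
    simpa using congrArg (· * l) hexp
  rw [← hvalue]
  refine tendsto_integral_filter_of_dominated_convergence (fun x ↦ C * twoSidedExp 1 1 x)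
    (.of_forall fun η ↦ Continuous.aestronglyMeasurable (by fun_prop)) ?_
    ((integrable_twoSidedExp one_pos one_pos).const_mul C) ?_
  · have hsmall : ∀ᶠ η : ℝ in 𝓝[>] 0, η < p / 2 :=
      eventually_nhdsWithin_of_eventually_nhds (eventually_lt_nhds (half_pos hp))
    filter_upwards [hsmall, self_mem_nhdsWithin] with η hηp hη
    refine .of_forall fun x ↦ ?_
    have hC0 : 0 ≤ C := nonneg_of_mul_nonneg_left ((norm_nonneg _).trans (hC 0))
      (norm_pos_iff.2 (twoSidedExp_pos p 0 0).ne')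
    have hkx := hC (x / η)
    rw [norm_twoSidedExp] at hkx
    calc ‖cexp x * k (x / η)‖ ≤ rexp x * (C * twoSidedExp p 0 (x / η)) := by
          rw [norm_mul, norm_exp_ofReal]
          gcongr
      _ = C * (rexp x * twoSidedExp p 0 (x / η)) := by ring
      _ ≤ C * twoSidedExp 1 1 x := by
          gcongr
          exact exp_mul_twoSidedExp_div_le hη (by linarith) x
  · filter_upwards [Measure.ae_ne volume 0] with x hx
    exact tendsto_exp_mul_comp_div hp hk hlim hx

theorem tendsto_mul_fourierLaplace {k : ℂ → ℂ} {s p : ℝ} {l : ℂ} (hp : 0 < p)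
    (hkc : Continuous fun t : ℝ ↦ k (t + s * I))
    (hk : (fun t : ℝ ↦ k (t + s * I)) =O[⊤] twoSidedExp p 0)
    (hlim : Tendsto (fun t : ℝ ↦ k (t + s * I)) atBot (𝓝 l)) :
    Tendsto (fun η : ℝ ↦ η * fourierLaplace k s (η * I)) (𝓝[>] 0) (𝓝 l) := by
  have hphase : Tendsto (fun η : ℝ ↦ cexp (η * (s * I))) (𝓝[>] 0) (𝓝 1) := by
    have hcont : Continuous fun η : ℝ ↦ cexp (η * (s * I)) := by fun_prop
    simpa using (hcont.tendsto 0).mono_left nhdsWithin_le_nhds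
  have hlimit := hphase.mul (tendsto_integral_exp_mul_comp_div hp hkc hk hlim)
  rw [one_mul] at hlimit
  refine hlimit.congr' ?_
  filter_upwards [self_mem_nhdsWithin] with η hη
  have hη0 : η ≠ 0 := (Set.mem_Ioi.1 hη).ne'
  have hscale := Measure.integral_comp_mul_left
    (fun x : ℝ ↦ cexp x * k ((x / η : ℝ) + s * I)) η
  rw [abs_of_pos (inv_pos.2 hη), eq_inv_smul_iff₀ hη0, real_smul] at hscale
  rw [← hscale, mul_left_comm, ← integral_const_mul, fourierLaplace, lineIntegral]
  congr 2 with t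
  rw [← mul_assoc, ← Complex.exp_add, mul_div_cancel_left₀ t hη0]
  congr 2
  push_cast
  linear_combination (η * t + η * s * I) * I_mul_I

end Abelian

section Sinh

lemma abs_sinh_re_le_norm_sinh (w : ℂ) : |Real.sinh w.re| ≤ ‖Complex.sinh w‖ := by
  have hnorm := abs_norm_sub_norm_le (cexp w) (cexp (-w))
  rw [← Complex.two_sinh, norm_mul, Complex.norm_two, Complex.norm_exp, Complex.norm_exp, neg_re]
    at hnorm
  rw [Real.sinh_eq, abs_div, abs_two]
  linarith

lemma exp_abs_div_four_le_abs_sinh {x : ℝ} (hx : 1 ≤ |x|) : rexp |x| / 4 ≤ |Real.sinh x| := by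
  rw [Real.abs_sinh, Real.sinh_eq]
  have hexp := Real.add_one_le_exp |x|
  have hexp_neg : rexp (-|x|) ≤ 1 := Real.exp_le_one_iff.2 (by linarith)
  linarith

lemma inv_sinh_isBigO_stripEnds {a : ℝ} (ha : 0 < a) (α β : ℝ) :
    (fun w : ℂ ↦ (Complex.sinh (a * w))⁻¹) =O[stripEnds α β] fun w ↦ twoSidedExp a a w.re := by
  refine .of_bound 4 (eventually_stripEnds.2 ⟨a⁻¹, fun w _ hw ↦ ?_⟩)
  have habs : |a * w.re| = a * |w.re| := by rw [abs_mul, abs_of_pos ha]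
  have hsinh : rexp (a * |w.re|) / 4 ≤ ‖Complex.sinh (a * w)‖ := by
    have hre := abs_sinh_re_le_norm_sinh (a * w)
    rw [re_ofReal_mul] at hre
    rw [← habs]
    exact (exp_abs_div_four_le_abs_sinh (habs ▸ (inv_le_iff_one_le_mul₀' ha).1 hw)).trans hre
  rw [norm_twoSidedExp, twoSidedExp_self, norm_inv, neg_mul, Real.exp_neg]
  calc ‖Complex.sinh (a * w)‖⁻¹ ≤ (rexp (a * |w.re|) / 4)⁻¹ := by gcongr
    _ = 4 * (rexp (a * |w.re|))⁻¹ := by rw [inv_div, div_eq_mul_inv]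

lemma sinh_ne_zero_of_abs_im_lt {w : ℂ} (hw0 : w ≠ 0) (hw : |w.im| < π) : Complex.sinh w ≠ 0 := by
  rw [← mul_ne_zero_iff_right I_ne_zero, ← Complex.sin_mul_I, Ne, Complex.sin_eq_zero_iff]
  rintro ⟨n, hn⟩
  have hre : -w.im = n * π := by simpa using congrArg re hn
  have him : w.re = 0 := by simpa using congrArg im hn
  have hn0 : n = 0 := by
    rw [← abs_neg, hre, abs_mul, abs_of_pos Real.pi_pos, mul_lt_iff_lt_one_left Real.pi_pos] at hw
    exact Int.abs_lt_one_iff.1 (by exact_mod_cast hw)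
  rw [hn0, Int.cast_zero, zero_mul, neg_eq_zero] at hre
  exact hw0 (Complex.ext him hre)

/-- The entire function `sinh w / w`, with value `1` at `0`. -/
def sinhc : ℂ → ℂ := dslope Complex.sinh 0

lemma sinh_eq_mul_sinhc (w : ℂ) : Complex.sinh w = w * sinhc w := by
  rw [eq_add_mul_dslope Complex.sinh w, Complex.sinh_zero, zero_add, sinhc]

@[fun_prop]
lemma differentiable_sinhc : Differentiable ℂ sinhc :=
  differentiableOn_univ.1 ((differentiableOn_dslope univ_mem).2
    Complex.differentiable_sinh.differentiableOn)

lemma sinhc_zero : sinhc 0 = 1 := by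
  rw [sinhc, dslope_same, Complex.deriv_sinh, Complex.cosh_zero]

lemma sinhc_ne_zero {w : ℂ} (hw : |w.im| < π) : sinhc w ≠ 0 := by
  rcases eq_or_ne w 0 with rfl | hw0
  · rw [sinhc_zero]
    exact one_ne_zero
  · exact right_ne_zero_of_mul (sinh_eq_mul_sinhc w ▸ sinh_ne_zero_of_abs_im_lt hw0 hw)

lemma iteratedDeriv_sinhc_zero (n : ℕ) :
    iteratedDeriv n sinhc 0 = iteratedDeriv (n + 1) Complex.sinh 0 / (n + 1) := by
  have hcoeff : iteratedDeriv n sinhc 0 / n.factorial =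
      iteratedDeriv (n + 1) Complex.sinh 0 / (n + 1).factorial := by
    rw [← taylorCoeff_eq (differentiable_sinhc.analyticAt 0),
      ← taylorCoeff_eq (Complex.differentiable_sinh.analyticAt 0)]
    rfl
  have hfact : (n.factorial : ℂ) ≠ 0 := by exact_mod_cast n.factorial_ne_zero
  rw [Nat.factorial_succ, Nat.cast_mul, mul_comm ((n + 1 : ℕ) : ℂ), ← div_div,
    div_right_comm, div_left_inj' hfact] at hcoeff
  exact_mod_cast hcoeff

end Sinh

section SinhTransform

lemma isBigO_line_top {f : ℂ → ℂ} {p q s : ℝ} (hf : Continuous fun t : ℝ ↦ f (t + s * I))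
    (h : f =O[stripEnds s s] fun w ↦ twoSidedExp p q w.re) :
    (fun t : ℝ ↦ f (t + s * I)) =O[⊤] twoSidedExp p q :=
  isBigO_top_of_isBigO_cocompact hf (by fun_prop) (twoSidedExp_pos p q)
    (isBigO_line_of_isBigO_stripEnds (Set.left_mem_Icc.2 le_rfl) h)

lemma inv_isBigO_one_stripEnds (α β : ℝ) :
    (fun w : ℂ ↦ w⁻¹) =O[stripEnds α β] fun _ ↦ (1 : ℝ) := by
  simpa using (tendsto_inv_pow_stripEnds α β 0).isBigO_one ℝ

lemma inv_mul_isBigO_stripEnds {f : ℂ → ℂ} {p q α β : ℝ}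
    (hf : (fun w ↦ (f w)⁻¹) =O[stripEnds α β] fun w ↦ twoSidedExp p q w.re) :
    (fun w ↦ (w * f w)⁻¹) =O[stripEnds α β] fun w ↦ twoSidedExp p q w.re := by
  simpa only [mul_inv, one_mul] using (inv_isBigO_one_stripEnds α β).mul hf

variable {a s : ℝ}

lemma sinh_mul_line_ne_zero (hs : 0 < s) (hsa : a * s < π) (ha : 0 < a) (t : ℝ) :
    Complex.sinh (a * (t + s * I)) ≠ 0 := by
  refine sinh_ne_zero_of_abs_im_lt
    (mul_ne_zero (ofReal_ne_zero.2 ha.ne') (add_mul_I_ne_zero hs.ne' t)) ?_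
  simpa [abs_of_pos ha, abs_of_pos hs] using hsa

lemma continuous_inv_mul_sinh_line (ha : 0 < a) (hs : 0 < s) (hsa : a * s < π) :
    Continuous fun t : ℝ ↦ ((t + s * I) * Complex.sinh (a * (t + s * I)))⁻¹ :=
  Continuous.inv₀ (by fun_prop) fun t ↦
    mul_ne_zero (add_mul_I_ne_zero hs.ne' t) (sinh_mul_line_ne_zero hs hsa ha t)

lemma lineIntegral_inv_sinh_sub (ha : 0 < a) (s : ℝ) (z : ℂ) :
    lineIntegral (fun w ↦ cexp (-I * z * w) * (Complex.sinh (a * w))⁻¹) (s - π / a) =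
      -cexp (-(π / a * z)) * fourierLaplace (fun w ↦ (Complex.sinh (a * w))⁻¹) s z := by
  have ha0 : (a : ℂ) ≠ 0 := ofReal_ne_zero.2 ha.ne'
  rw [fourierLaplace, lineIntegral, lineIntegral, ← integral_const_mul]
  congr 1 with t
  have hsinh : Complex.sinh (a * (t + (s - π / a : ℝ) * I)) =
      -Complex.sinh (a * (t + s * I)) := by
    rw [← Complex.sinh_sub_pi_mul_I]
    push_cast
    field_simp
    ring_nf
  have hexp : cexp (-I * z * (t + (s - π / a : ℝ) * I)) =
      cexp (-(π / a * z)) * cexp (-I * z * (t + s * I)) := by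
    rw [← Complex.exp_add]
    push_cast
    congr 1
    linear_combination (z * π / a) * I_mul_I
  rw [hsinh, hexp, inv_neg]
  ring

lemma inv_mul_sinh_line_isBigO (ha : 0 < a) (hs : 0 < s) (hsa : a * s < π) :
    (fun t : ℝ ↦ ((t + s * I) * Complex.sinh (a * (t + s * I)))⁻¹) =O[⊤] twoSidedExp a a :=
  isBigO_line_top (f := fun w ↦ (w * Complex.sinh (a * w))⁻¹)
    (continuous_inv_mul_sinh_line ha hs hsa)
    (inv_mul_isBigO_stripEnds (inv_sinh_isBigO_stripEnds ha s s))

theorem fourierLaplace_inv_sinh (ha : 0 < a) (hs : 0 < s) (hsa : a * s < π) {z : ℂ}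
    (hz : |z.im| < a) :
    fourierLaplace (fun w ↦ (Complex.sinh (a * w))⁻¹) s z * (1 + cexp (-(π / a * z))) =
      -(2 * π * I / a) := by
  have ha0 : (a : ℂ) ≠ 0 := ofReal_ne_zero.2 ha.ne'
  obtain ⟨hza, hza'⟩ := abs_lt.1 hz
  have hbelow : s - π / a < 0 := by rwa [sub_neg, lt_div_iff₀' ha]
  set h : ℂ → ℂ := fun w ↦ cexp (-I * z * w) / (a * sinhc (a * w)) with hh
  have hsinhc : ∀ w ∈ im ⁻¹' Set.Icc (s - π / a) s, a * sinhc (a * w) ≠ 0 := fun w hw ↦ by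
    refine mul_ne_zero ha0 (sinhc_ne_zero (abs_lt.2 ?_))
    rw [im_ofReal_mul]
    have hlow := mul_le_mul_of_nonneg_left hw.1 ha.le
    have hup := mul_le_mul_of_nonneg_left hw.2 ha.le
    rw [mul_sub, mul_div_cancel₀ π ha.ne'] at hlow
    constructor <;> linarith [mul_pos ha hs]
  have hdiv (w : ℂ) : h w / w ^ (0 + 1) = cexp (-I * z * w) * (Complex.sinh (a * w))⁻¹ := by
    rw [hh, sinh_eq_mul_sinhc, zero_add, pow_one]
    field_simp
  have hresidue := lineIntegral_sub_eq_residue hbelow hs (h := h) (p := a - z.im) (q := a + z.im)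
    (DifferentiableOn.div (by fun_prop) (by fun_prop) hsinhc) 0 (by linarith) (by linarith) (by
      simp only [hdiv]
      exact isBigO_cexp_mul inf_le_right (inv_sinh_isBigO_stripEnds ha _ _) z)
  simp only [hdiv, lineIntegral_inv_sinh_sub ha] at hresidue
  rw [iteratedDeriv_zero, ← fourierLaplace, hh] at hresidue
  simp only [mul_zero, Complex.exp_zero, sinhc_zero, Nat.factorial_zero, Nat.cast_one] at hresidue
  linear_combination -hresidue

lemma tendsto_fourierLaplace_atBot {k : ℂ → ℂ} {p q : ℝ} (hs : 0 < s)
    (hk : (fun t : ℝ ↦ k (t + s * I)) =O[⊤] twoSidedExp p q) {z : ℂ} (hzq : -q < z.im)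
    (hzp : z.im < p) : Tendsto (fun t : ℝ ↦ fourierLaplace k s (z + t)) atBot (𝓝 0) := by
  have hline : Tendsto (fun t : ℝ ↦ z + t) atBot (𝓟 (im ⁻¹' Set.Icc z.im z.im)) :=
    tendsto_principal.2 (.of_forall fun t ↦ by simp)
  refine ((fourierLaplace_isBigO hk hzq hzp).comp_tendsto hline).trans_tendsto ?_
  refine Real.tendsto_exp_atBot.comp (Tendsto.const_mul_atBot hs ?_)
  simpa using tendsto_atBot_add_const_left atBot z.re tendsto_id

lemma hasDerivAt_fourierLaplace_inv_mul_sinh (ha : 0 < a) (hs : 0 < s) (hsa : a * s < π)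
    {z : ℂ} (hz : |z.im| < a) :
    HasDerivAt (fourierLaplace (fun w ↦ (w * Complex.sinh (a * w))⁻¹) s)
      (-I * fourierLaplace (fun w ↦ (Complex.sinh (a * w))⁻¹) s z) z := by
  obtain ⟨hza, hza'⟩ := abs_lt.1 hz
  convert hasDerivAt_fourierLaplace (k := fun w ↦ (w * Complex.sinh (a * w))⁻¹)
    (continuous_inv_mul_sinh_line ha hs hsa) (inv_mul_sinh_line_isBigO ha hs hsa) hza hza' using 1
  rw [fourierLaplace, fourierLaplace, lineIntegral, lineIntegral, ← integral_const_mul]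
  congr 1 with t
  rw [mul_inv, mul_assoc (-I) (t + s * I), mul_inv_cancel_left₀ (add_mul_I_ne_zero hs.ne' t)]
  ring

lemma hasDerivAt_exp_half_fourierLaplace_mul (ha : 0 < a) (hs : 0 < s) (hsa : a * s < π)
    {z : ℂ} (hz : |z.im| < a) :
    HasDerivAt (fun z ↦ cexp (fourierLaplace (fun w ↦ (w * Complex.sinh (a * w))⁻¹) s z / 2) *
      (1 + cexp (π / a * z))) 0 z := by
  have hJ := hasDerivAt_fourierLaplace_inv_mul_sinh ha hs hsa hz
  have hexp : HasDerivAt (fun z ↦ 1 + cexp (π / a * z)) (cexp (π / a * z) * (π / a)) z := by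
    simpa using (((hasDerivAt_id z).const_mul (π / a : ℂ)).cexp).const_add 1
  refine ((hJ.div_const 2).cexp.mul hexp).congr_deriv ?_
  have hL := fourierLaplace_inv_sinh ha hs hsa hz
  rw [Complex.exp_neg] at hL
  have hE := Complex.exp_ne_zero (π / a * z)
  set J := fourierLaplace (fun w ↦ (w * Complex.sinh (a * w))⁻¹) s
  set L := fourierLaplace (fun w ↦ (Complex.sinh (a * w))⁻¹) s z
  set E := cexp (π / a * z)
  have hL' : L * (1 + E) = -(2 * π * I / a) * E := by
    rw [← hL]
    field_simp
    ring
  linear_combination (-I / 2 * cexp (J z / 2)) * hL' + (cexp (J z / 2) * π / a * E) * I_mul_I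

lemma tendsto_exp_half_fourierLaplace_mul_atBot (ha : 0 < a) (hs : 0 < s) (hsa : a * s < π)
    {z : ℂ} (hz : |z.im| < a) :
    Tendsto (fun t : ℝ ↦
      cexp (fourierLaplace (fun w ↦ (w * Complex.sinh (a * w))⁻¹) s (z + t) / 2) *
        (1 + cexp (π / a * (z + t)))) atBot (𝓝 1) := by
  have hJ := tendsto_fourierLaplace_atBot (k := fun w ↦ (w * Complex.sinh (a * w))⁻¹) hs
    (inv_mul_sinh_line_isBigO ha hs hsa) (abs_lt.1 hz).1 (abs_lt.1 hz).2
  have hexp : Tendsto (fun t : ℝ ↦ cexp (π / a * (z + t))) atBot (𝓝 0) := by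
    refine Complex.tendsto_exp_nhds_zero_iff.2 ?_
    norm_cast
    simp only [re_ofReal_mul, add_re, ofReal_re]
    exact (tendsto_atBot_add_const_left atBot z.re tendsto_id).const_mul_atBot
      (div_pos Real.pi_pos ha)
  convert (hJ.div_const 2).cexp.mul (hexp.const_add 1) using 2
  simp

theorem exp_neg_half_fourierLaplace_inv_mul_sinh (ha : 0 < a) (hs : 0 < s) (hsa : a * s < π)
    {z : ℂ} (hz : |z.im| < a) :
    cexp (-(fourierLaplace (fun w ↦ (w * Complex.sinh (a * w))⁻¹) s z / 2)) =
      1 + cexp (π / a * z) := by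
  set Φ : ℂ → ℂ := fun z ↦ cexp (fourierLaplace (fun w ↦ (w * Complex.sinh (a * w))⁻¹) s z / 2) *
    (1 + cexp (π / a * z))
  have hderiv (t : ℝ) : HasDerivAt (fun t : ℝ ↦ Φ (z + t)) 0 t :=
    ((hasDerivAt_exp_half_fourierLaplace_mul ha hs hsa (z := z + t)
      (by simpa using hz)).comp_const_add z t).comp_ofReal
  have hconst (t : ℝ) : Φ (z + t) = Φ z := by
    simpa using is_const_of_deriv_eq_zero (fun t ↦ (hderiv t).differentiableAt)
      (fun t ↦ (hderiv t).deriv) t 0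
  have hlim : Tendsto (fun t : ℝ ↦ Φ (z + t)) atBot (𝓝 1) :=
    tendsto_exp_half_fourierLaplace_mul_atBot ha hs hsa hz
  simp only [hconst] at hlim
  have hΦz : Φ z = 1 := tendsto_nhds_unique tendsto_const_nhds hlim
  rw [Complex.exp_neg]
  exact (eq_inv_of_mul_eq_one_right hΦz).symm

end SinhTransform

section QuantumDilogarithm

/-- The height of the contour in the integral representation chosen in `eb`. -/
def contourHeight (b : ℝ) : ℝ := π * min b b⁻¹ / 2

lemma contourHeight_inv (b : ℝ) : contourHeight b⁻¹ = contourHeight b := by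
  rw [contourHeight, contourHeight, inv_inv, min_comm]

/-- The function whose Fourier–Laplace transform is `4 log e_b(z / 2)`. -/
def ebKernel (b : ℝ) (w : ℂ) : ℂ :=
  (w * (Complex.sinh (b * w) * Complex.sinh ((b⁻¹ : ℝ) * w)))⁻¹

lemma ebKernel_inv (b : ℝ) : ebKernel b⁻¹ = ebKernel b := by
  ext w
  rw [ebKernel, ebKernel, inv_inv, mul_comm (Complex.sinh _)]

lemma ebKernel_neg (b : ℝ) (w : ℂ) : ebKernel b (-w) = -ebKernel b w := by
  rw [ebKernel, ebKernel, mul_neg, mul_neg, Complex.sinh_neg, Complex.sinh_neg, neg_mul_neg,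
    neg_mul, inv_neg]

/-- The logarithm of `e_b` given by the integral representation. -/
def logEb (b : ℝ) (z : ℂ) : ℂ :=
  1 / 4 * fourierLaplace (ebKernel b) (contourHeight b) (2 * z)

lemma logEb_inv (b : ℝ) : logEb b⁻¹ = logEb b := by
  ext z
  rw [logEb, logEb, ebKernel_inv, contourHeight_inv]

lemma eb_eq_exp_logEb (b : ℝ) (z : ℂ) : eb b z = cexp (logEb b z) := by
  rw [eb, ebE, logEb, fourierLaplace, lineIntegral]
  congr 3 with t
  rw [ebIntegrand, ebKernel, contourHeight, ofReal_inv]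
  ring_nf

lemma eb_inv (b : ℝ) : eb b⁻¹ = eb b := by
  ext z
  rw [eb_eq_exp_logEb, eb_eq_exp_logEb, logEb_inv]

lemma eb_ne_zero (b : ℝ) (z : ℂ) : eb b z ≠ 0 := by
  rw [eb_eq_exp_logEb]
  exact Complex.exp_ne_zero _

variable {b : ℝ}

lemma contourHeight_pos (hb : 0 < b) : 0 < contourHeight b :=
  div_pos (mul_pos Real.pi_pos (lt_min hb (inv_pos.2 hb))) two_pos

lemma mul_contourHeight_le (hb : 0 < b) : b * contourHeight b ≤ π / 2 := by
  calc b * contourHeight b ≤ b * (π * b⁻¹ / 2) := by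
        unfold contourHeight
        gcongr
        exact min_le_right b b⁻¹
    _ = π / 2 := by
        field_simp

lemma mul_contourHeight_lt (hb : 0 < b) : b * contourHeight b < π :=
  (mul_contourHeight_le hb).trans_lt (half_lt_self Real.pi_pos)

lemma inv_mul_contourHeight_lt (hb : 0 < b) : b⁻¹ * contourHeight b < π := by
  rw [← contourHeight_inv]
  exact mul_contourHeight_lt (inv_pos.2 hb)

lemma ebKernel_isBigO_stripEnds (hb : 0 < b) (α β : ℝ) :
    ebKernel b =O[stripEnds α β] fun w ↦ twoSidedExp (b + b⁻¹) (b + b⁻¹) w.re := by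
  refine inv_mul_isBigO_stripEnds ?_
  simp only [mul_inv, ← twoSidedExp_mul]
  exact (inv_sinh_isBigO_stripEnds hb α β).mul (inv_sinh_isBigO_stripEnds (inv_pos.2 hb) α β)

lemma continuous_ebKernel_line (hb : 0 < b) :
    Continuous fun t : ℝ ↦ ebKernel b (t + contourHeight b * I) := by
  have hpos := contourHeight_pos hb
  exact Continuous.inv₀ (by fun_prop) fun t ↦ mul_ne_zero (add_mul_I_ne_zero hpos.ne' t)
    (mul_ne_zero (sinh_mul_line_ne_zero hpos (mul_contourHeight_lt hb) hb t)
      (sinh_mul_line_ne_zero hpos (inv_mul_contourHeight_lt hb) (inv_pos.2 hb) t))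

lemma ebKernel_line_isBigO (hb : 0 < b) :
    (fun t : ℝ ↦ ebKernel b (t + contourHeight b * I)) =O[⊤]
      twoSidedExp (b + b⁻¹) (b + b⁻¹) :=
  isBigO_line_top (continuous_ebKernel_line hb) (ebKernel_isBigO_stripEnds hb _ _)

lemma im_two_mul_mem_Ioo {c : ℝ} {z : ℂ} (hz : |z.im| < c / 2) :
    -c < (2 * z).im ∧ (2 * z).im < c := by
  rw [show (2 * z).im = 2 * z.im by simp]
  constructor <;> linarith [abs_lt.1 hz]

lemma differentiableAt_logEb (hb : 0 < b) {z : ℂ} (hz : |z.im| < (b + b⁻¹) / 2) :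
    DifferentiableAt ℂ (logEb b) z := by
  obtain ⟨hzq, hzp⟩ := im_two_mul_mem_Ioo hz
  have hderiv := hasDerivAt_fourierLaplace (continuous_ebKernel_line hb) (ebKernel_line_isBigO hb)
    hzq hzp
  exact (hderiv.differentiableAt.comp z (by fun_prop)).const_mul _

lemma differentiableAt_eb (hb : 0 < b) {z : ℂ} (hz : |z.im| < (b + b⁻¹) / 2) :
    DifferentiableAt ℂ (eb b) z := by
  rw [funext (eb_eq_exp_logEb b)]
  exact (differentiableAt_logEb hb hz).cexp

lemma logEb_isBigO_strip (hb : 0 < b) {β : ℝ} (hβ : β < (b + b⁻¹) / 2) :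
    logEb b =O[𝓟 (im ⁻¹' Set.Icc (-β) β)] fun z ↦ rexp (contourHeight b * (2 * z.re)) := by
  have hdouble : Tendsto (fun z : ℂ ↦ 2 * z) (𝓟 (im ⁻¹' Set.Icc (-β) β))
      (𝓟 (im ⁻¹' Set.Icc (-(2 * β)) (2 * β))) := by
    refine tendsto_principal_principal.2 fun z hz ↦ ?_
    rw [Set.mem_preimage, show (2 * z).im = 2 * z.im by simp]
    constructor <;> linarith [hz.1, hz.2]
  have hbound := fourierLaplace_isBigO (ebKernel_line_isBigO hb) (α := -(2 * β)) (β := 2 * β)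
    (by linarith) (by linarith)
  exact ((hbound.comp_tendsto hdouble).const_mul_left (1 / 4)).congr (fun z ↦ rfl)
    fun z ↦ by simp

lemma tendsto_eb_add_atBot (hb : 0 < b) {c : ℂ} (hc : |c.im| < (b + b⁻¹) / 2) :
    Tendsto (fun t : ℝ ↦ eb b (t + c)) atBot (𝓝 1) := by
  obtain ⟨hcq, hcp⟩ := im_two_mul_mem_Ioo hc
  have hlog := ((tendsto_fourierLaplace_atBot (contourHeight_pos hb) (ebKernel_line_isBigO hb)
    hcq hcp).comp (tendsto_id.const_mul_atBot two_pos)).const_mul (1 / 4)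
  rw [mul_zero] at hlog
  convert hlog.cexp using 2 with t
  · rw [eb_eq_exp_logEb, logEb, Function.comp_apply, id, ofReal_mul, ofReal_ofNat, mul_add,
      add_comm]
  · rw [Complex.exp_zero]

end QuantumDilogarithm

section FunctionalEquation

lemma cb_im (b : ℝ) : (cb b).im = (b + b⁻¹) / 2 := by
  simp [cb]

lemma cb_inv (b : ℝ) : cb b⁻¹ = cb b := by
  rw [cb, cb, ofReal_inv, inv_inv, add_comm (b : ℂ)⁻¹]

variable {b : ℝ}

lemma cexp_sub_cexp_mul_ebKernel {w : ℂ} (hw : Complex.sinh (b * w) ≠ 0) (z : ℂ) :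
    cexp (-I * (z - b * I) * w) * ebKernel b w - cexp (-I * (z + b * I) * w) * ebKernel b w =
      -2 * (cexp (-I * z * w) * (w * Complex.sinh ((b⁻¹ : ℝ) * w))⁻¹) := by
  have hsplit (ε : ℂ) : cexp (-I * (z + ε * (b * I)) * w) =
      cexp (-I * z * w) * cexp (ε * (b * w)) := by
    rw [← Complex.exp_add]
    congr 1
    linear_combination -ε * b * w * I_mul_I
  have hsub := hsplit (-1)
  have hadd := hsplit 1
  rw [neg_one_mul, neg_one_mul, ← sub_eq_add_neg] at hsub
  rw [one_mul, one_mul] at hadd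
  rw [hsub, hadd, ← sub_mul, ← mul_sub, ← neg_sub (cexp (b * w)), ← Complex.two_sinh, ebKernel,
    mul_left_comm, mul_inv (Complex.sinh (b * w))]
  linear_combination -2 * cexp (-I * z * w) * (w * Complex.sinh ((b⁻¹ : ℝ) * w))⁻¹ *
    mul_inv_cancel₀ hw

lemma fourierLaplace_ebKernel_sub (hb : 0 < b) {z : ℂ} (hz : |z.im| < b⁻¹) :
    fourierLaplace (ebKernel b) (contourHeight b) (z - b * I) -
        fourierLaplace (ebKernel b) (contourHeight b) (z + b * I) =
      -2 * fourierLaplace (fun w ↦ (w * Complex.sinh ((b⁻¹ : ℝ) * w))⁻¹) (contourHeight b) z := by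
  obtain ⟨hz₁, hz₂⟩ := abs_lt.1 hz
  have him : (b * I : ℂ).im = b := by simp
  have hint (z' : ℂ) := integrable_cexp_mul (z := z') (continuous_ebKernel_line hb)
    (ebKernel_line_isBigO hb)
  simp only [fourierLaplace, lineIntegral]
  rw [← integral_sub (hint (z - b * I) (by rw [sub_im, him]; linarith)
      (by rw [sub_im, him]; linarith)) (hint (z + b * I) (by rw [add_im, him]; linarith)
      (by rw [add_im, him]; linarith)), ← integral_const_mul]
  exact integral_congr_ae <| .of_forall fun t ↦ cexp_sub_cexp_mul_ebKernel
    (sinh_mul_line_ne_zero (contourHeight_pos hb) (mul_contourHeight_lt hb) hb t) z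

theorem eb_sub_half_mul_I (hb : 0 < b) {z : ℂ} (hz : |z.im| < b⁻¹ / 2) :
    eb b (z - b / 2 * I) = (1 + cexp (2 * π * b * z)) * eb b (z + b / 2 * I) := by
  have hz' : |(2 * z).im| < b⁻¹ := abs_lt.2 (im_two_mul_mem_Ioo hz)
  have hsinh := exp_neg_half_fourierLaplace_inv_mul_sinh (inv_pos.2 hb) (contourHeight_pos hb)
    (inv_mul_contourHeight_lt hb) hz'
  rw [ofReal_inv, div_inv_eq_mul, show (π * b * (2 * z) : ℂ) = 2 * π * b * z by ring,
    ← ofReal_inv] at hsinh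
  rw [← hsinh, eb_eq_exp_logEb, eb_eq_exp_logEb, ← Complex.exp_add, logEb, logEb, mul_sub, mul_add,
    ← mul_assoc, mul_div_cancel₀ (b : ℂ) two_ne_zero]
  congr 1
  linear_combination 1 / 4 * fourierLaplace_ebKernel_sub hb hz'

theorem eb_eq_mul_eb_add (hb : 0 < b) {z : ℂ} (hz₁ : -((b + b⁻¹) / 2) < z.im)
    (hz₂ : z.im + b < (b + b⁻¹) / 2) :
    eb b z = (1 - cexp (2 * π * b * (z + cb b))) * eb b (z + b * I) := by
  have hb0 : (b : ℂ) ≠ 0 := ofReal_ne_zero.2 hb.ne'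
  have him : (z + b / 2 * I).im = z.im + b / 2 := by simp
  have hmid := eb_sub_half_mul_I hb (z := z + b / 2 * I)
    (abs_lt.2 ⟨by rw [him]; linarith, by rw [him]; linarith⟩)
  have hexp : cexp (2 * π * b * (z + cb b)) = -cexp (2 * π * b * (z + b / 2 * I)) := by
    rw [← neg_one_mul, ← Complex.exp_pi_mul_I, ← Complex.exp_add, cb]
    congr 1
    field_simp
    ring
  rw [hexp, sub_neg_eq_add]
  convert hmid using 3 <;> ring

end FunctionalEquation

section Inversion

lemma iteratedDeriv_two_fun_mul {f g : ℂ → ℂ} {z : ℂ} (hf : AnalyticAt ℂ f z)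
    (hg : AnalyticAt ℂ g z) : iteratedDeriv 2 (fun w ↦ f w * g w) z =
      f z * iteratedDeriv 2 g z + 2 * deriv f z * deriv g z + iteratedDeriv 2 f z * g z := by
  rw [iteratedDeriv_fun_mul hf.contDiffAt hg.contDiffAt]
  simp [Finset.sum_range_succ, iteratedDeriv_one]

lemma iteratedDeriv_two_div {f g : ℂ → ℂ} {z : ℂ} (hf : AnalyticAt ℂ f z) (hg : AnalyticAt ℂ g z)
    (hgz : g z = 1) (hg' : deriv g z = 0) :
    iteratedDeriv 2 (fun w ↦ f w / g w) z = iteratedDeriv 2 f z - f z * iteratedDeriv 2 g z := by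
  have hgz0 : g z ≠ 0 := hgz ▸ one_ne_zero
  have hmul := iteratedDeriv_two_fun_mul (hf.fun_div hg hgz0) hg
  have hcancel : (fun w ↦ f w / g w * g w) =ᶠ[𝓝 z] f := by
    filter_upwards [hg.continuousAt.eventually_ne hgz0] with w hw using div_mul_cancel₀ _ hw
  rw [hcancel.iteratedDeriv_eq, hg', hgz] at hmul
  linear_combination -hmul

lemma deriv_sinhc_mul_zero (a : ℂ) : deriv (fun w ↦ sinhc (a * w)) 0 = 0 := by
  have hderiv := congrFun (iteratedDeriv_comp_const_mul (n := 1) differentiable_sinhc.contDiff a) 0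
  rw [mul_zero, iteratedDeriv_sinhc_zero, iteratedDeriv_one] at hderiv
  simpa using hderiv

lemma iteratedDeriv_two_sinhc_mul_zero (a : ℂ) :
    iteratedDeriv 2 (fun w ↦ sinhc (a * w)) 0 = a ^ 2 / 3 := by
  have hderiv := congrFun (iteratedDeriv_comp_const_mul (n := 2) differentiable_sinhc.contDiff a) 0
  rw [mul_zero, iteratedDeriv_sinhc_zero, Complex.iteratedDeriv_odd_sinh 1,
    Complex.cosh_zero] at hderiv
  rw [hderiv]
  norm_num [div_eq_mul_inv]

lemma sinhc_mul_ne_zero {a s : ℝ} (ha : 0 < a) (has : a * s < π) {w : ℂ}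
    (hw : w.im ∈ Set.Icc (-s) s) : sinhc (a * w) ≠ 0 := by
  refine sinhc_ne_zero (lt_of_le_of_lt ?_ has)
  rw [im_ofReal_mul, abs_mul, abs_of_pos ha]
  gcongr
  exact abs_le.2 hw

lemma iteratedDeriv_two_exp_div_sinhc (η a b : ℂ) :
    iteratedDeriv 2 (fun w ↦ cexp (η * w) / (sinhc (a * w) * sinhc (b * w))) 0 =
      η ^ 2 - (a ^ 2 + b ^ 2) / 3 := by
  have hsinhc (c : ℂ) : Differentiable ℂ fun w ↦ sinhc (c * w) := by fun_prop
  have hprod : Differentiable ℂ fun w ↦ sinhc (a * w) * sinhc (b * w) := by fun_prop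
  have hexp : Differentiable ℂ fun w ↦ cexp (η * w) := by fun_prop
  have hderiv : deriv (fun w ↦ sinhc (a * w) * sinhc (b * w)) 0 = 0 := by
    rw [deriv_fun_mul (hsinhc a 0) (hsinhc b 0), deriv_sinhc_mul_zero, deriv_sinhc_mul_zero]
    ring
  rw [iteratedDeriv_two_div (hexp.analyticAt 0) (hprod.analyticAt 0) (by simp [sinhc_zero]) hderiv,
    iteratedDeriv_two_fun_mul ((hsinhc a).analyticAt 0) ((hsinhc b).analyticAt 0),
    iteratedDeriv_cexp_const_mul, deriv_sinhc_mul_zero, iteratedDeriv_two_sinhc_mul_zero,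
    iteratedDeriv_two_sinhc_mul_zero]
  simp only [mul_zero, sinhc_zero, Complex.exp_zero]
  ring

lemma fourierLaplace_neg {k : ℂ → ℂ} (hk : ∀ w, k (-w) = -k w) (s : ℝ) (z : ℂ) :
    fourierLaplace k s (-z) = -fourierLaplace k (-s) z := by
  rw [fourierLaplace, fourierLaplace, lineIntegral, lineIntegral, ← integral_neg,
    ← integral_neg_eq_self]
  congr 1 with t
  rw [show ((-t : ℝ) + s * I : ℂ) = -(t + (-s : ℝ) * I) by push_cast; ring, hk, mul_neg]
  ring_nf

variable {b : ℝ}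

lemma ebKernel_eq_inv_pow_mul (hb : 0 < b) (w : ℂ) :
    ebKernel b w = (w ^ (2 + 1) * (sinhc (b * w) * sinhc ((b⁻¹ : ℝ) * w)))⁻¹ := by
  have hb0 : (b : ℂ) ≠ 0 := ofReal_ne_zero.2 hb.ne'
  rw [ebKernel, sinh_eq_mul_sinhc, sinh_eq_mul_sinhc, ofReal_inv]
  congr 1
  linear_combination w ^ 3 * sinhc (b * w) * sinhc ((b : ℂ)⁻¹ * w) * mul_inv_cancel₀ hb0

theorem logEb_add_logEb_neg (hb : 0 < b) {z : ℂ} (hz : |z.im| < (b + b⁻¹) / 2) :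
    logEb b z + logEb b (-z) = π * I * z ^ 2 + π * I * (b ^ 2 + (b⁻¹ : ℝ) ^ 2) / 12 := by
  obtain ⟨hzq, hzp⟩ := im_two_mul_mem_Ioo hz
  have hpos := contourHeight_pos hb
  set η : ℂ := -I * (2 * z) with hη
  have hkernel : (fun w ↦ cexp (η * w) * ebKernel b w) =
      fun w ↦ cexp (η * w) / (sinhc (b * w) * sinhc ((b⁻¹ : ℝ) * w)) / w ^ (2 + 1) := by
    ext w
    rw [ebKernel_eq_inv_pow_mul hb, mul_inv_rev, ← mul_assoc, div_eq_mul_inv, div_eq_mul_inv]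
  have hhol : DifferentiableOn ℂ
      (fun w ↦ cexp (η * w) / (sinhc (b * w) * sinhc ((b⁻¹ : ℝ) * w)))
      (im ⁻¹' Set.Icc (-contourHeight b) (contourHeight b)) := by
    refine DifferentiableOn.div (by fun_prop) (by fun_prop) fun w hw ↦ mul_ne_zero ?_ ?_
    · exact sinhc_mul_ne_zero hb (mul_contourHeight_lt hb) hw
    · exact sinhc_mul_ne_zero (inv_pos.2 hb) (inv_mul_contourHeight_lt hb) hw
  have hdecay := isBigO_cexp_mul inf_le_right
    (ebKernel_isBigO_stripEnds hb (-contourHeight b) (contourHeight b)) (2 * z)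
  rw [hkernel] at hdecay
  have hres := lineIntegral_sub_eq_residue (neg_neg_iff_pos.2 hpos) hpos hhol 2
    (sub_pos.2 hzp) (neg_lt_iff_pos_add'.1 hzq) hdecay
  rw [← hkernel, iteratedDeriv_two_exp_div_sinhc] at hres
  rw [logEb, logEb, mul_neg, fourierLaplace_neg (ebKernel_neg b), fourierLaplace, fourierLaplace]
  have hfact : ((2 : ℕ).factorial : ℂ) = 2 := by norm_num
  have hη2 : η ^ 2 = -4 * z ^ 2 := by
    rw [hη]
    linear_combination 4 * z ^ 2 * I_sq
  rw [hfact, hη2] at hres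
  linear_combination -(1 / 4) * hres

end Inversion

section Growth

variable {b : ℝ}

lemma re_logEb_add_re_logEb_neg (hb : 0 < b) {z : ℂ} (hz : |z.im| < (b + b⁻¹) / 2) :
    (logEb b z).re + (logEb b (-z)).re = -(2 * π * (z.re * z.im)) := by
  rw [← add_re, logEb_add_logEb_neg hb hz,
    show (π * I * z ^ 2 + π * I * (b ^ 2 + (b⁻¹ : ℝ) ^ 2) / 12 : ℂ) =
      (π : ℝ) * (I * z ^ 2) + (π * (b ^ 2 + b⁻¹ ^ 2) / 12 : ℝ) * I by push_cast; ring,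
    add_re, re_ofReal_mul, re_ofReal_mul, I_re, I_mul_re, sq, mul_im]
  ring

lemma re_logEb_add_isBigO_one (hb : 0 < b) {β : ℝ} (hβ : β < (b + b⁻¹) / 2) :
    (fun z ↦ (logEb b z).re + 2 * π * (z.re⁺ * z.im)) =O[𝓟 (im ⁻¹' Set.Icc (-β) β)]
      fun _ ↦ (1 : ℝ) := by
  obtain ⟨C, hC0, hC⟩ := (logEb_isBigO_strip hb hβ).exists_nonneg
  rw [isBigOWith_principal] at hC
  have hleft {z : ℂ} (hz : z.im ∈ Set.Icc (-β) β) (hre : z.re ≤ 0) : |(logEb b z).re| ≤ C := by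
    refine (abs_re_le_norm _).trans ((hC z hz).trans (mul_le_of_le_one_right hC0 ?_))
    rw [Real.norm_of_nonneg (Real.exp_pos _).le, Real.exp_le_one_iff]
    exact mul_nonpos_of_nonneg_of_nonpos (contourHeight_pos hb).le (by linarith)
  refine IsBigO.of_bound C (mem_principal.2 fun z hz ↦ ?_)
  rw [Set.mem_ofPred_eq, norm_one, mul_one, Real.norm_eq_abs]
  rcases le_total z.re 0 with hre | hre
  · rw [posPart_eq_zero.2 hre, zero_mul, mul_zero, add_zero]
    exact hleft hz hre
  · have hinv := re_logEb_add_re_logEb_neg hb (lt_of_le_of_lt (abs_le.2 hz) hβ)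
    rw [posPart_eq_self.2 hre, show (logEb b z).re + 2 * π * (z.re * z.im) =
      -(logEb b (-z)).re by linarith, abs_neg]
    exact hleft (by rw [neg_im]; exact ⟨neg_le_neg hz.2, neg_le.1 hz.1⟩) (by simpa using hre)

lemma posPart_add_sub_posPart_isBigO_one (x : ℝ) (l : Filter ℂ) :
    (fun z : ℂ ↦ (z.re + x)⁺ - z.re⁺) =O[l] fun _ ↦ (1 : ℝ) := by
  refine .of_bound |x| (.of_forall fun z ↦ ?_)
  rw [norm_one, mul_one, Real.norm_eq_abs, posPart_def, posPart_def]
  simpa using abs_max_sub_max_le_abs (z.re + x) z.re 0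

lemma im_add_isBigO_one (α β : ℝ) (c : ℂ) :
    (fun z : ℂ ↦ (z + c).im) =O[𝓟 (im ⁻¹' Set.Icc α β)] fun _ ↦ (1 : ℝ) := by
  refine .of_bound (|α| + |β| + |c.im|) (mem_principal.2 fun z hz ↦ ?_)
  rw [Set.mem_ofPred_eq, norm_one, mul_one, Real.norm_eq_abs, add_im]
  have := abs_le_max_abs_abs hz.1 hz.2
  have := max_le_add_of_nonneg (abs_nonneg α) (abs_nonneg β)
  linarith [abs_add_le z.im c.im]

lemma re_logEb_add_shift_isBigO_one (hb : 0 < b) {α β : ℝ} {c : ℂ}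
    (hα : -((b + b⁻¹) / 2) < α + c.im) (hβ : β + c.im < (b + b⁻¹) / 2) :
    (fun z ↦ (logEb b (z + c)).re + 2 * π * (z.re⁺ * (z + c).im))
      =O[𝓟 (im ⁻¹' Set.Icc α β)] fun _ ↦ (1 : ℝ) := by
  set δ := max (-(α + c.im)) (β + c.im)
  have hshift : Tendsto (· + c) (𝓟 (im ⁻¹' Set.Icc α β)) (𝓟 (im ⁻¹' Set.Icc (-δ) δ)) := by
    refine tendsto_principal_principal.2 fun z hz ↦ ?_
    rw [Set.mem_preimage, add_im]
    constructor
    · linarith [le_max_left (-(α + c.im)) (β + c.im), hz.1]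
    · linarith [le_max_right (-(α + c.im)) (β + c.im), hz.2]
  have hlog := (re_logEb_add_isBigO_one hb (max_lt (by linarith) hβ)).comp_tendsto hshift
  have hcorr := (((posPart_add_sub_posPart_isBigO_one c.re (𝓟 (im ⁻¹' Set.Icc α β))).mul
    (im_add_isBigO_one α β c)).const_mul_left (2 * π))
  simp only [mul_one] at hcorr
  refine (hlog.sub hcorr).congr_left fun z ↦ ?_
  simp only [Function.comp_apply, add_re]
  ring

/-- The quotient of two translates of `e_b`, the building block of the integrand and of the
right-hand side of the beta integral. -/
def ebRatio (b : ℝ) (c d z : ℂ) : ℂ := eb b (z + c) / eb b (z + d)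

theorem ebRatio_isBigO_strip (hb : 0 < b) {α β : ℝ} {c d : ℂ}
    (hcα : -((b + b⁻¹) / 2) < α + c.im) (hcβ : β + c.im < (b + b⁻¹) / 2)
    (hdα : -((b + b⁻¹) / 2) < α + d.im) (hdβ : β + d.im < (b + b⁻¹) / 2) :
    ebRatio b c d =O[𝓟 (im ⁻¹' Set.Icc α β)]
      fun z ↦ twoSidedExp (2 * π * (c - d).im) 0 z.re := by
  obtain ⟨C, hC⟩ := isBigO_principal.1 ((re_logEb_add_shift_isBigO_one hb hcα hcβ).sub
    (re_logEb_add_shift_isBigO_one hb hdα hdβ))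
  refine .of_bound (rexp C) (mem_principal.2 fun z hz ↦ ?_)
  have hbound := (le_abs_self _).trans (hC z hz)
  rw [norm_one, mul_one, add_im, add_im] at hbound
  rw [Set.mem_ofPred_eq, ebRatio, eb_eq_exp_logEb, eb_eq_exp_logEb, ← Complex.exp_sub, norm_exp,
    norm_twoSidedExp, twoSidedExp, ← Real.exp_add, Real.exp_le_exp, sub_re, sub_im]
  linarith

lemma ebRatio_inv (b : ℝ) : ebRatio b⁻¹ = ebRatio b := by
  funext c d z
  rw [ebRatio, ebRatio, eb_inv]

lemma differentiableAt_ebRatio (hb : 0 < b) {c d z : ℂ} (hc : |(z + c).im| < (b + b⁻¹) / 2)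
    (hd : |(z + d).im| < (b + b⁻¹) / 2) : DifferentiableAt ℂ (ebRatio b c d) z :=
  ((differentiableAt_eb hb hc).comp z (by fun_prop)).fun_div
    ((differentiableAt_eb hb hd).comp z (by fun_prop)) (eb_ne_zero b _)

lemma differentiableOn_ebRatio (hb : 0 < b) {α β : ℝ} {c d : ℂ}
    (hcα : -((b + b⁻¹) / 2) < α + c.im) (hcβ : β + c.im < (b + b⁻¹) / 2)
    (hdα : -((b + b⁻¹) / 2) < α + d.im) (hdβ : β + d.im < (b + b⁻¹) / 2) :
    DifferentiableOn ℂ (ebRatio b c d) (im ⁻¹' Set.Icc α β) := by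
  intro z ⟨hzα, hzβ⟩
  refine (differentiableAt_ebRatio hb ?_ ?_).differentiableWithinAt <;>
  · rw [add_im, abs_lt]
    constructor <;> linarith

end Growth

section Periodic

lemma lineIntegral_add_eq {f : ℂ → ℂ} {b s : ℝ}
    (hf : ∀ w : ℂ, w.im = s → f (w + b * I) = f w) :
    lineIntegral f (s + b) = lineIntegral f s := by
  rw [lineIntegral, lineIntegral]
  congr 1 with t
  rw [ofReal_add, add_mul, ← add_assoc, hf _ (by simp)]

lemma inv_sinh_sq_add_mul_I {b : ℝ} (hb : b ≠ 0) (w : ℂ) :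
    (Complex.sinh ((π / b : ℝ) * (w + b * I)))⁻¹ ^ 2 = (Complex.sinh ((π / b : ℝ) * w))⁻¹ ^ 2 := by
  have hbC : (b : ℂ) ≠ 0 := ofReal_ne_zero.2 hb
  rw [mul_add, show ((π / b : ℝ) * (b * I) : ℂ) = π * I by push_cast; field_simp,
    Complex.sinh_add, Complex.cosh_mul_I, Complex.sinh_mul_I, Complex.cos_pi, Complex.sin_pi]
  simp

lemma mul_inv_sinh_sq_eq_div (g : ℂ → ℂ) (k w : ℂ) :
    g w * (Complex.sinh (k * w))⁻¹ ^ 2 = g w / (k * sinhc (k * w)) ^ 2 / w ^ (1 + 1) := by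
  rw [sinh_eq_mul_sinhc, div_div, div_eq_mul_inv, ← mul_pow, inv_pow]
  ring_nf

lemma comp_const_add_isBigO {R : ℂ → ℂ} {α β p q : ℝ} (u : ℂ)
    (hR : R =O[𝓟 (im ⁻¹' Set.Icc α β)] fun w ↦ twoSidedExp p q w.re) :
    (fun w ↦ R (u + w)) =O[𝓟 (im ⁻¹' Set.Icc (α - u.im) (β - u.im))]
      fun w ↦ twoSidedExp p q w.re := by
  have hshift : Tendsto (u + ·) (𝓟 (im ⁻¹' Set.Icc (α - u.im) (β - u.im)))
      (𝓟 (im ⁻¹' Set.Icc α β)) := by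
    refine tendsto_principal_principal.2 fun w hw ↦ ?_
    rw [Set.mem_preimage, add_im]
    constructor <;> linarith [hw.1, hw.2]
  refine (hR.comp_tendsto hshift).trans ?_
  simpa only [Function.comp_def, add_re, add_comm u.re] using
    (twoSidedExp_add_isBigO p q u.re).comp_tendsto (tendsto_top (f := re))

variable {R : ℂ → ℂ} {A B b κ : ℝ}

lemma differentiableOn_div_sinhc_sq (hb : 0 < b) (hR : DifferentiableOn ℂ R (im ⁻¹' Set.Ioo A B))
    {α : ℝ} (hα : A < α) (hαB : α + b < B) {u : ℂ} (hαu : α < u.im) (huα : u.im < α + b) :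
    DifferentiableOn ℂ (fun w ↦ R (u + w) / ((π / b : ℝ) * sinhc ((π / b : ℝ) * w)) ^ 2)
      (im ⁻¹' Set.Icc (α - u.im) (α + b - u.im)) := by
  have hk : 0 < π / b := div_pos Real.pi_pos hb
  refine DifferentiableOn.div (hR.comp (by fun_prop) fun w hw ↦ ?_) (by fun_prop) fun w hw ↦ ?_
  · rw [Set.mem_preimage, add_im]
    constructor <;> linarith [hw.1, hw.2]
  · have hw' : |w.im| < b := abs_lt.2 ⟨by linarith [hw.1], by linarith [hw.2]⟩
    refine pow_ne_zero 2 (mul_ne_zero (ofReal_ne_zero.2 hk.ne')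
      (sinhc_mul_ne_zero (s := |w.im|) hk ?_ ⟨neg_abs_le _, le_abs_self _⟩))
    calc π / b * |w.im| < π / b * b := by gcongr
      _ = π := div_mul_cancel₀ π hb.ne'

lemma deriv_div_sinhc_sq {g : ℂ → ℂ} (hg : DifferentiableAt ℂ g 0) {k : ℂ} (hk : k ≠ 0) :
    deriv (fun w ↦ g w / (k * sinhc (k * w)) ^ 2) 0 = deriv g 0 / k ^ 2 := by
  have hsinhc : Differentiable ℂ fun w ↦ sinhc (k * w) := by fun_prop
  have hden : HasDerivAt (fun w ↦ (k * sinhc (k * w)) ^ 2) 0 0 := by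
    have hderiv := ((hsinhc 0).hasDerivAt.const_mul k).fun_pow 2
    rwa [deriv_sinhc_mul_zero, mul_zero, mul_zero] at hderiv
  have hdiv := hg.hasDerivAt.fun_div hden (by simpa [sinhc_zero] using hk)
  rw [hdiv.deriv, mul_zero, sinhc_zero]
  field_simp
  ring

theorem deriv_eq_zero_of_periodic (hb : 0 < b) (hAB : A + b < B)
    (hR : DifferentiableOn ℂ R (im ⁻¹' Set.Ioo A B))
    (hper : ∀ u : ℂ, A < u.im → u.im + b < B → R (u + b * I) = R u) (hκ : κ < 2 * (π / b))
    (hgrowth : ∀ α β : ℝ, A < α → β < B →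
      R =O[𝓟 (im ⁻¹' Set.Icc α β)] fun u ↦ twoSidedExp (-κ) (-κ) u.re)
    {u : ℂ} (hu : u ∈ im ⁻¹' Set.Ioo A B) : deriv R u = 0 := by
  obtain ⟨huA, huB⟩ := hu
  obtain ⟨α, hα₁, hα₂⟩ : ∃ α, max A (u.im - b) < α ∧ α < min u.im (B - b) := by
    refine exists_between (max_lt (lt_min huA ?_) (lt_min ?_ ?_)) <;> linarith
  obtain ⟨hαA, hαb⟩ := max_lt_iff.1 hα₁
  obtain ⟨hαu, hαB⟩ := lt_min_iff.1 hα₂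
  set k : ℝ := π / b
  have hk : 0 < k := div_pos Real.pi_pos hb
  have hdecay := ((comp_const_add_isBigO u (hgrowth α (α + b) hαA (by linarith))).mono
    inf_le_right).mul ((inv_sinh_isBigO_stripEnds hk _ _).pow 2)
  simp only [sq, twoSidedExp_mul] at hdecay
  simp only [← sq, mul_inv_sinh_sq_eq_div (fun w ↦ R (u + w))] at hdecay
  have hperiod : lineIntegral (fun w ↦ R (u + w) * (Complex.sinh (k * w))⁻¹ ^ 2) (α - u.im + b) =
      lineIntegral (fun w ↦ R (u + w) * (Complex.sinh (k * w))⁻¹ ^ 2) (α - u.im) := by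
    refine lineIntegral_add_eq fun w hw ↦ ?_
    rw [inv_sinh_sq_add_mul_I hb.ne', ← add_assoc, hper] <;> rw [add_im, hw] <;> linarith
  simp only [mul_inv_sinh_sq_eq_div (fun w ↦ R (u + w))] at hperiod
  have hres := lineIntegral_sub_eq_residue (by linarith) (by linarith)
    (differentiableOn_div_sinhc_sq hb hR hαA (by linarith) hαu (by linarith)) 1 (by linarith)
    (by linarith) hdecay
  have hRu : DifferentiableAt ℂ (fun w ↦ R (u + w)) 0 := by
    have hR' := hR.differentiableAt ((isOpen_Ioo.preimage continuous_im).mem_nhds ⟨huA, huB⟩)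
    exact DifferentiableAt.comp 0 (by rwa [add_zero]) (by fun_prop)
  rw [add_sub_right_comm, hperiod, sub_self, iteratedDeriv_one,
    deriv_div_sinhc_sq hRu (ofReal_ne_zero.2 hk.ne'), deriv_comp_const_add, add_zero] at hres
  simpa [Real.pi_ne_zero, hk.ne'] using hres

theorem eq_of_periodic (hb : 0 < b) (hAB : A + b < B)
    (hR : DifferentiableOn ℂ R (im ⁻¹' Set.Ioo A B))
    (hper : ∀ u : ℂ, A < u.im → u.im + b < B → R (u + b * I) = R u) (hκ : κ < 2 * (π / b))
    (hgrowth : ∀ α β : ℝ, A < α → β < B →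
      R =O[𝓟 (im ⁻¹' Set.Icc α β)] fun u ↦ twoSidedExp (-κ) (-κ) u.re)
    {u v : ℂ} (hu : u ∈ im ⁻¹' Set.Ioo A B) (hv : v ∈ im ⁻¹' Set.Ioo A B) : R u = R v :=
  (isOpen_Ioo.preimage continuous_im).is_const_of_deriv_eq_zero
    ((convex_Ioo A B).is_linear_preimage imLm.isLinear).isPreconnected hR
    (fun _ hw ↦ deriv_eq_zero_of_periodic hb hAB hR hper hκ hgrowth hw) hu hv

end Periodic

section FourierLaplaceShift

lemma fourierLaplace_congr {k k' : ℂ → ℂ} {s : ℝ} (h : ∀ w : ℂ, w.im = s → k w = k' w) (z : ℂ) :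
    fourierLaplace k s z = fourierLaplace k' s z := by
  rw [fourierLaplace, fourierLaplace, lineIntegral, lineIntegral]
  congr 1 with t
  rw [h _ (by simp)]

lemma fourierLaplace_add_height (k : ℂ → ℂ) (s b : ℝ) (z : ℂ) :
    fourierLaplace k (s + b) z = cexp (b * z) * fourierLaplace (fun w ↦ k (w + b * I)) s z := by
  rw [fourierLaplace, fourierLaplace, lineIntegral, lineIntegral, ← integral_const_mul]
  congr 1 with t
  rw [← mul_assoc, ← Complex.exp_add, ofReal_add, add_mul, ← add_assoc]
  congr 2
  linear_combination -b * z * I_mul_I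

lemma fourierLaplace_one_sub_exp_mul {k : ℂ → ℂ} {s : ℝ} {z a : ℂ} (c : ℂ)
    (hz : Integrable fun t : ℝ ↦ cexp (-I * z * (t + s * I)) * k (t + s * I))
    (hza : Integrable fun t : ℝ ↦ cexp (-I * (z + a * I) * (t + s * I)) * k (t + s * I)) :
    fourierLaplace (fun w ↦ (1 - c * cexp (a * w)) * k w) s z =
      fourierLaplace k s z - c * fourierLaplace k s (z + a * I) := by
  simp only [fourierLaplace, lineIntegral]
  rw [← integral_const_mul, ← integral_sub hz (hza.const_mul c)]
  congr 1 with t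
  rw [show -I * (z + a * I) * (t + s * I) = -I * z * (t + s * I) + a * (t + s * I) by
    linear_combination -a * (t + s * I) * I_mul_I, Complex.exp_add]
  ring

end FourierLaplaceShift

section BetaIntegral

lemma im_two_pi_mul (v : ℂ) : (2 * π * v).im = 2 * π * v.im := by
  rw [show (2 * π * v : ℂ) = (2 * π : ℝ) * v by push_cast; rfl, im_ofReal_mul]

variable {b s : ℝ}

lemma continuous_ebRatio_line (hb : 0 < b) {c d : ℂ}
    (hc : |s + c.im| < (b + b⁻¹) / 2) (hd : |s + d.im| < (b + b⁻¹) / 2) :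
    Continuous fun t : ℝ ↦ ebRatio b c d (t + s * I) := by
  rw [abs_lt] at hc hd
  exact continuous_line_of_continuousOn
    (differentiableOn_ebRatio hb hc.1 hc.2 hd.1 hd.2).continuousOn (Set.left_mem_Icc.2 le_rfl)

lemma ebRatio_line_isBigO (hb : 0 < b) {c d : ℂ}
    (hc : |s + c.im| < (b + b⁻¹) / 2) (hd : |s + d.im| < (b + b⁻¹) / 2) :
    (fun t : ℝ ↦ ebRatio b c d (t + s * I)) =O[⊤] twoSidedExp (2 * π * (c - d).im) 0 := by
  rw [abs_lt] at hc hd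
  exact isBigO_line_of_isBigO_strip (Set.left_mem_Icc.2 le_rfl)
    (ebRatio_isBigO_strip hb hc.1 hc.2 hd.1 hd.2)

/-- The integrand of the beta integral without its exponential factor. -/
def ebBetaKernel (b : ℝ) (x : ℂ) : ℂ → ℂ := ebRatio b (cb b) (-x - cb b)

/-- The beta integral along the line of height `s`, as a function of `v = u + c_b`. -/
def ebBetaIntegral (b : ℝ) (x : ℂ) (s : ℝ) (v : ℂ) : ℂ :=
  fourierLaplace (ebBetaKernel b x) s (2 * π * v)

variable {x : ℂ}

lemma abs_add_cb_im_lt (hb : 0 < b) (hx : -((b + b⁻¹) / 2) < x.im) (hxs : x.im < s)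
    (hs : s < 0) : |s + (cb b).im| < (b + b⁻¹) / 2 := by
  have := inv_pos.2 hb
  rw [cb_im, abs_lt]
  constructor <;> linarith

lemma abs_add_neg_sub_cb_im_lt (hb : 0 < b) (hx : -((b + b⁻¹) / 2) < x.im) (hxs : x.im < s)
    (hs : s < 0) : |s + (-x - cb b).im| < (b + b⁻¹) / 2 := by
  have := inv_pos.2 hb
  rw [sub_im, neg_im, cb_im, abs_lt]
  constructor <;> linarith

lemma continuous_ebBetaKernel_line (hb : 0 < b) (hx : -((b + b⁻¹) / 2) < x.im) (hxs : x.im < s)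
    (hs : s < 0) : Continuous fun t : ℝ ↦ ebBetaKernel b x (t + s * I) :=
  continuous_ebRatio_line hb (abs_add_cb_im_lt hb hx hxs hs)
    (abs_add_neg_sub_cb_im_lt hb hx hxs hs)

lemma ebBetaKernel_line_isBigO (hb : 0 < b) (hx : -((b + b⁻¹) / 2) < x.im) (hxs : x.im < s)
    (hs : s < 0) : (fun t : ℝ ↦ ebBetaKernel b x (t + s * I)) =O[⊤]
      twoSidedExp (2 * π * (b + b⁻¹ + x.im)) 0 := by
  have hbound := ebRatio_line_isBigO hb (abs_add_cb_im_lt hb hx hxs hs)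
    (abs_add_neg_sub_cb_im_lt hb hx hxs hs)
  rwa [show (cb b - (-x - cb b)).im = b + b⁻¹ + x.im by
    rw [sub_im, sub_im, neg_im, cb_im]; ring] at hbound

lemma two_pi_mul_im_mem_Ioo {v : ℂ} {p : ℝ} (hv₀ : 0 < v.im) (hv : v.im < p) :
    -0 < (2 * π * v).im ∧ (2 * π * v).im < 2 * π * p := by
  have := Real.pi_pos
  rw [im_two_pi_mul, neg_zero]
  exact ⟨by positivity, by gcongr⟩

lemma integrable_cexp_mul_ebBetaKernel (hb : 0 < b) (hx : -((b + b⁻¹) / 2) < x.im)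
    (hxs : x.im < s) (hs : s < 0) {v : ℂ} (hv₀ : 0 < v.im) (hv : v.im < b + b⁻¹ + x.im) :
    Integrable fun t : ℝ ↦ cexp (-I * (2 * π * v) * (t + s * I)) * ebBetaKernel b x (t + s * I) :=
  integrable_cexp_mul (continuous_ebBetaKernel_line hb hx hxs hs)
    (ebBetaKernel_line_isBigO hb hx hxs hs) (two_pi_mul_im_mem_Ioo hv₀ hv).1
    (two_pi_mul_im_mem_Ioo hv₀ hv).2

lemma differentiableAt_ebBetaIntegral (hb : 0 < b) (hx : -((b + b⁻¹) / 2) < x.im)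
    (hxs : x.im < s) (hs : s < 0) {v : ℂ} (hv₀ : 0 < v.im) (hv : v.im < b + b⁻¹ + x.im) :
    DifferentiableAt ℂ (ebBetaIntegral b x s) v :=
  (hasDerivAt_fourierLaplace (continuous_ebBetaKernel_line hb hx hxs hs)
    (ebBetaKernel_line_isBigO hb hx hxs hs) (two_pi_mul_im_mem_Ioo hv₀ hv).1
    (two_pi_mul_im_mem_Ioo hv₀ hv).2).differentiableAt.comp v (by fun_prop)

lemma ebBetaIntegral_isBigO_strip (hb : 0 < b) (hx : -((b + b⁻¹) / 2) < x.im)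
    (hxs : x.im < s) (hs : s < 0) {α β : ℝ} (hα : 0 < α) (hβ : β < b + b⁻¹ + x.im) :
    ebBetaIntegral b x s =O[𝓟 (im ⁻¹' Set.Icc α β)]
      fun v ↦ twoSidedExp (-(2 * π * s)) (2 * π * s) v.re := by
  have hscale : Tendsto (fun v : ℂ ↦ 2 * π * v) (𝓟 (im ⁻¹' Set.Icc α β))
      (𝓟 (im ⁻¹' Set.Icc (2 * π * α) (2 * π * β))) := by
    refine tendsto_principal_principal.2 fun v hv ↦ ?_
    rw [Set.mem_preimage, im_two_pi_mul]
    constructor <;> gcongr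
    exacts [hv.1, hv.2]
  have hbound := (fourierLaplace_isBigO (ebBetaKernel_line_isBigO hb hx hxs hs)
    (by rw [neg_zero]; positivity) (by gcongr : 2 * π * β < _)).comp_tendsto hscale
  refine hbound.congr_right fun v ↦ ?_
  rw [twoSidedExp_neg_self, Function.comp_apply,
    show (2 * π * v : ℂ) = (2 * π : ℝ) * v by push_cast; rfl, re_ofReal_mul]
  ring_nf

end BetaIntegral

section BetaFunctionalEquation

variable {b s : ℝ} {x : ℂ}

lemma ebRatio_sub_mul_I (hb : 0 < b) {w d : ℂ} (hw₁ : -b⁻¹ < w.im) (hw₂ : w.im < 0) :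
    ebRatio b (cb b - b * I) d w =
      (1 - 1 * cexp ((2 * π * b : ℝ) * w)) * ebRatio b (cb b) d w := by
  have hbC : (b : ℂ) ≠ 0 := ofReal_ne_zero.2 hb.ne'
  have him : (w + (cb b - b * I)).im = w.im + (b⁻¹ - b) / 2 := by
    rw [add_im, sub_im, cb_im, im_ofReal_mul, I_im]; ring
  have hstep := eb_eq_mul_eb_add hb (z := w + (cb b - b * I)) (by rw [him]; linarith)
    (by rw [him]; linarith)
  have hexp : cexp (2 * π * b * (w + (cb b - b * I) + cb b)) = cexp ((2 * π * b : ℝ) * w) := by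
    rw [← Complex.exp_periodic ((2 * π * b : ℝ) * w), cb]
    congr 1
    push_cast
    field_simp
    ring
  rw [ebRatio, ebRatio, hstep, hexp, one_mul, mul_div_assoc]
  congr 3
  ring

lemma ebRatio_sub_mul_I_add_mul_I (hb : 0 < b) {c w : ℂ} (hw₁ : x.im < w.im)
    (hw₂ : w.im < x.im + b⁻¹) :
    ebRatio b (c - b * I) (-x - cb b) (w + b * I) =
      (1 - cexp (-(2 * π * b * x)) * cexp ((2 * π * b : ℝ) * w)) *
        ebRatio b c (-x - cb b) w := by
  have him : (w + (-x - cb b)).im = w.im - x.im - (b + b⁻¹) / 2 := by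
    rw [add_im, sub_im, neg_im, cb_im]; ring
  have hstep := eb_eq_mul_eb_add hb (z := w + (-x - cb b)) (by rw [him]; linarith)
    (by rw [him]; linarith)
  have hne := eb_ne_zero b (w + (-x - cb b))
  rw [hstep] at hne
  have hexp : cexp (2 * π * b * (w + (-x - cb b) + cb b)) =
      cexp (-(2 * π * b * x)) * cexp ((2 * π * b : ℝ) * w) := by
    rw [← Complex.exp_add]
    push_cast
    ring_nf
  rw [← hexp, ebRatio, ebRatio, hstep, ← mul_div_assoc,
    mul_div_mul_left _ _ (left_ne_zero_of_mul hne)]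
  congr 2 <;> ring

lemma fourierLaplace_ebRatio_sub_mul_I (hb : 0 < b) (hx : -((b + b⁻¹) / 2) < x.im)
    (hb1 : b ≤ b⁻¹) (hxs : x.im < s) (hs : s < 0) {z : ℂ} (hz₀ : 0 < z.im)
    (hz : z.im < 2 * π * (b⁻¹ + x.im)) :
    fourierLaplace (ebRatio b (cb b - b * I) (-x - cb b)) s z =
      fourierLaplace (ebRatio b (cb b - b * I) (-x - cb b)) (s + b) z := by
  have himc : (cb b - b * I).im = (b⁻¹ - b) / 2 := by
    rw [sub_im, cb_im, im_ofReal_mul, I_im]; ring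
  have himd : (-x - cb b).im = -x.im - (b + b⁻¹) / 2 := by rw [sub_im, neg_im, cb_im]
  refine fourierLaplace_eq_of_differentiableOn (by linarith)
    (differentiableOn_ebRatio hb ?_ ?_ ?_ ?_)
    ((ebRatio_isBigO_strip hb ?_ ?_ ?_ ?_).mono inf_le_right) (by linarith) ?_
  on_goal 9 => convert hz using 2; rw [sub_im, himc, himd]; ring
  all_goals first | rw [himc] | rw [himd]
  all_goals linarith

lemma ebBetaIntegral_add_mul_I (hb : 0 < b) (hb1 : b ≤ b⁻¹) (hx : -((b + b⁻¹) / 2) < x.im)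
    (hxs : x.im < s) (hs : s < 0) {v : ℂ} (hv₀ : 0 < v.im) (hv : v.im + b < b + b⁻¹ + x.im) :
    (1 - cexp (2 * π * b * v)) * ebBetaIntegral b x s v =
      (1 - cexp (2 * π * b * (v - x))) * ebBetaIntegral b x s (v + b * I) := by
  have hint := integrable_cexp_mul_ebBetaKernel hb hx hxs hs hv₀ (by linarith)
  have hshift : 2 * π * v + (2 * π * b : ℝ) * I = 2 * π * (v + b * I) := by push_cast; ring
  have hint' := integrable_cexp_mul_ebBetaKernel hb hx hxs hs (v := v + b * I)
    (by simp; linarith) (by simpa using hv)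
  rw [← hshift] at hint'
  simp only [ebBetaKernel] at hint hint'
  have hcontour := fourierLaplace_ebRatio_sub_mul_I hb hx hb1 hxs hs (z := 2 * π * v)
    (by rw [im_two_pi_mul]; positivity) (by rw [im_two_pi_mul]; gcongr; linarith)
  rw [fourierLaplace_add_height,
    fourierLaplace_congr fun w hw ↦
      ebRatio_sub_mul_I hb (by rw [hw]; linarith) (by rwa [hw]),
    fourierLaplace_congr fun w hw ↦
      ebRatio_sub_mul_I_add_mul_I hb (by rwa [hw]) (by rw [hw]; linarith),
    fourierLaplace_one_sub_exp_mul _ hint hint',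
    fourierLaplace_one_sub_exp_mul _ hint hint', hshift] at hcontour
  have hexp : cexp (2 * π * b * (v - x)) =
      cexp (b * (2 * π * v)) * cexp (-(2 * π * b * x)) := by
    rw [← Complex.exp_add]; ring_nf
  rw [hexp, show 2 * π * b * v = b * (2 * π * v) by ring, ebBetaIntegral, ebBetaIntegral,
    ebBetaKernel]
  linear_combination hcontour

end BetaFunctionalEquation

section BetaQuotient

variable {b s : ℝ} {x : ℂ}

/-- The quotient of the beta integral by the part `e_b(u - x) / e_b(u)` of its value that depends
on `u`. -/
def ebBetaQuotient (b : ℝ) (x : ℂ) (s : ℝ) (u : ℂ) : ℂ :=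
  ebBetaIntegral b x s (u + cb b) * ebRatio b 0 (-x) u

lemma add_cb_im (b : ℝ) (u : ℂ) : (u + cb b).im = u.im + (b + b⁻¹) / 2 := by
  rw [add_im, cb_im]

lemma ebRatio_zero_neg_add_mul_I (hb : 0 < b) {u : ℂ} (hx : x.im < 0)
    (hu₁ : -((b + b⁻¹) / 2) < u.im) (hu₂ : u.im + b < (b + b⁻¹) / 2 + x.im) :
    (1 - cexp (2 * π * b * (u + cb b))) * ebRatio b 0 (-x) (u + b * I) =
      (1 - cexp (2 * π * b * (u + cb b - x))) * ebRatio b 0 (-x) u := by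
  have hstep := eb_eq_mul_eb_add hb hu₁ (by linarith)
  have hstep' := eb_eq_mul_eb_add hb (z := u - x) (by rw [sub_im]; linarith)
    (by rw [sub_im]; linarith)
  have hne := eb_ne_zero b (u - x)
  rw [hstep'] at hne
  have hne₁ := left_ne_zero_of_mul hne
  rw [ebRatio, ebRatio, add_zero, add_zero, ← sub_eq_add_neg, ← sub_eq_add_neg, hstep, hstep',
    show u + b * I - x = u - x + b * I by ring, show u + cb b - x = u - x + cb b by ring]
  field_simp

lemma ebBetaQuotient_add_mul_I (hb : 0 < b) (hb1 : b ≤ b⁻¹) (hx : -((b + b⁻¹) / 2) < x.im)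
    (hxs : x.im < s) (hs : s < 0) {u : ℂ} (hu₁ : -((b + b⁻¹) / 2) < u.im)
    (hu₂ : u.im + b < (b + b⁻¹) / 2 + x.im) :
    ebBetaQuotient b x s (u + b * I) = ebBetaQuotient b x s u := by
  have hbeta := ebBetaIntegral_add_mul_I hb hb1 hx hxs hs (v := u + cb b)
    (by rw [add_cb_im]; linarith) (by rw [add_cb_im]; linarith)
  have hratio := ebRatio_zero_neg_add_mul_I hb (hxs.trans hs) hu₁ hu₂
  have hne : (1 - cexp (2 * π * b * (u + cb b))) ≠ 0 := by
    have h := eb_ne_zero b u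
    rw [eb_eq_mul_eb_add hb hu₁ (by linarith)] at h
    exact left_ne_zero_of_mul h
  rw [ebBetaQuotient, ebBetaQuotient, show u + b * I + cb b = u + cb b + b * I by ring]
  refine mul_left_cancel₀ hne ?_
  linear_combination ebBetaIntegral b x s (u + cb b + b * I) * hratio - ebRatio b 0 (-x) u * hbeta

lemma differentiableOn_ebBetaQuotient (hb : 0 < b) (hx : -((b + b⁻¹) / 2) < x.im)
    (hxs : x.im < s) (hs : s < 0) : DifferentiableOn ℂ (ebBetaQuotient b x s)
      (im ⁻¹' Set.Ioo (-((b + b⁻¹) / 2)) ((b + b⁻¹) / 2 + x.im)) := by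
  rintro u ⟨hu₁, hu₂⟩
  have hbeta : DifferentiableAt ℂ (fun u ↦ ebBetaIntegral b x s (u + cb b)) u :=
    (differentiableAt_ebBetaIntegral hb hx hxs hs (by rw [add_cb_im]; linarith)
      (by rw [add_cb_im]; linarith)).comp u (by fun_prop)
  refine (hbeta.mul (differentiableAt_ebRatio hb ?_ ?_)).differentiableWithinAt <;>
  · rw [add_im, abs_lt]
    constructor <;> simp only [zero_im, neg_im] <;> linarith

lemma ebBetaQuotient_isBigO_strip (hb : 0 < b) (hx : -((b + b⁻¹) / 2) < x.im)
    (hxs : x.im < s) (hs : s < 0) {α β : ℝ} (hα : -((b + b⁻¹) / 2) < α)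
    (hβ : β < (b + b⁻¹) / 2 + x.im) :
    ebBetaQuotient b x s =O[𝓟 (im ⁻¹' Set.Icc α β)]
      fun u ↦ twoSidedExp (2 * π * (x.im - s)) (2 * π * s) u.re := by
  have hbeta := comp_const_add_isBigO (cb b) (ebBetaIntegral_isBigO_strip hb hx hxs hs
    (α := α + (b + b⁻¹) / 2) (β := β + (b + b⁻¹) / 2) (by linarith) (by linarith))
  rw [cb_im, add_sub_cancel_right, add_sub_cancel_right] at hbeta
  have hratio := ebRatio_isBigO_strip hb (α := α) (β := β) (c := 0) (d := -x) (by simpa)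
    (by rw [zero_im]; linarith) (by rw [neg_im]; linarith) (by rw [neg_im]; linarith)
  refine (hbeta.mul hratio).congr (fun u ↦ by rw [ebBetaQuotient, add_comm]) fun u ↦ ?_
  rw [twoSidedExp_mul, zero_sub, neg_neg]
  ring_nf

theorem ebBetaQuotient_eq (hb : 0 < b) (hb1 : b ≤ b⁻¹) (hx : -((b + b⁻¹) / 2) < x.im)
    (hxs : x.im < s) (hs : s < 0) {u v : ℂ}
    (hu : u ∈ im ⁻¹' Set.Ioo (-((b + b⁻¹) / 2)) ((b + b⁻¹) / 2 + x.im))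
    (hv : v ∈ im ⁻¹' Set.Ioo (-((b + b⁻¹) / 2)) ((b + b⁻¹) / 2 + x.im)) :
    ebBetaQuotient b x s u = ebBetaQuotient b x s v := by
  have hpi := Real.pi_pos
  refine eq_of_periodic hb (by linarith) (differentiableOn_ebBetaQuotient hb hx hxs hs)
    (fun u hu₁ hu₂ ↦ ebBetaQuotient_add_mul_I hb hb1 hx hxs hs hu₁ hu₂)
    (κ := 2 * π * -x.im) ?_ (fun α β hα hβ ↦ ?_) hu hv
  · rw [mul_assoc, div_eq_mul_inv]
    gcongr
    linarith
  · refine (ebBetaQuotient_isBigO_strip hb hx hxs hs hα hβ).trans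
      ((isBigO_twoSidedExp ?_ ?_ ⊤).comp_tendsto tendsto_top)
    · nlinarith
    · nlinarith

end BetaQuotient

section Reflection

open ComplexConjugate

lemma conj_fourierLaplace {k : ℂ → ℂ} (hk : ∀ w, k (conj w) = conj (k w)) (s : ℝ) (z : ℂ) :
    conj (fourierLaplace k s z) = fourierLaplace k (-s) (-conj z) := by
  rw [fourierLaplace, fourierLaplace, lineIntegral, lineIntegral, ← integral_conj]
  congr 1 with t
  have hconj : conj (t + s * I : ℂ) = t + (-s : ℝ) * I := by simp
  rw [map_mul, ← hk, ← Complex.exp_conj, map_mul, map_mul, map_neg, conj_I, hconj, neg_neg,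
    neg_mul_neg]

variable (b : ℝ)

lemma ebKernel_conj (w : ℂ) : ebKernel b (conj w) = conj (ebKernel b w) := by
  simp only [ebKernel, map_inv₀, map_mul, ← Complex.sinh_conj, conj_ofReal]

lemma conj_logEb (z : ℂ) : conj (logEb b z) = -logEb b (conj z) := by
  have hneg := fourierLaplace_neg (ebKernel_neg b) (contourHeight b) (-(2 * conj z))
  rw [neg_neg] at hneg
  have hquarter : conj (1 / 4 : ℂ) = 1 / 4 := by simpa using conj_ofReal (1 / 4)
  have htwo : conj (2 : ℂ) = 2 := conj_ofNat 2
  rw [logEb, logEb, hneg, map_mul, conj_fourierLaplace (ebKernel_conj b), map_mul, hquarter, htwo,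
    mul_neg, neg_neg]

lemma norm_eb_mul_norm_eb_conj (z : ℂ) : ‖eb b z‖ * ‖eb b (conj z)‖ = 1 := by
  rw [← norm_conj (eb b z), ← norm_mul, eb_eq_exp_logEb, eb_eq_exp_logEb, ← Complex.exp_conj,
    ← Complex.exp_add, conj_logEb, neg_add_cancel, Complex.exp_zero, norm_one]

end Reflection

section ZeroOfEb

variable {b : ℝ}

lemma tendsto_inv_mul_one_sub_cexp (a : ℂ) :
    Tendsto (fun η : ℝ ↦ (η : ℂ)⁻¹ * (1 - cexp (a * η))) (𝓝[>] 0) (𝓝 (-a)) := by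
  have hderiv : HasDerivAt (fun η : ℝ ↦ 1 - cexp (a * η)) (-a) 0 := by
    refine ((ofRealCLM.hasDerivAt (x := (0 : ℝ))).const_mul a).cexp.const_sub 1 |>.congr_deriv ?_
    simp
  simpa using hderiv.tendsto_slope_zero_right

lemma tendsto_eb_add_mul_I (hb : 0 < b) {c : ℂ} (hc : |c.im| < (b + b⁻¹) / 2) :
    Tendsto (fun η : ℝ ↦ eb b (c + η * I)) (𝓝[>] 0) (𝓝 (eb b c)) := by
  have hline : Tendsto (fun η : ℝ ↦ c + η * I) (𝓝[>] 0) (𝓝 c) := by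
    have hcont : Continuous fun η : ℝ ↦ c + η * I := by fun_prop
    simpa using (hcont.tendsto 0).mono_left nhdsWithin_le_nhds
  exact (differentiableAt_eb hb hc).continuousAt.tendsto.comp hline

lemma tendsto_inv_mul_eb_neg_cb_add (hb : 0 < b) :
    Tendsto (fun η : ℝ ↦ (η : ℂ)⁻¹ * eb b (-cb b + η * I)) (𝓝[>] 0)
      (𝓝 (-(2 * π * I * b) * eb b (-cb b + b * I))) := by
  have hb' := inv_pos.2 hb
  have him : (-cb b + b * I).im = (b - b⁻¹) / 2 := by
    rw [add_im, neg_im, cb_im, im_ofReal_mul, I_im]; ring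
  refine ((tendsto_inv_mul_one_sub_cexp (2 * π * I * b)).mul (tendsto_eb_add_mul_I hb
    (c := -cb b + b * I) (by rw [him, abs_lt]; constructor <;> linarith))).congr' ?_
  filter_upwards [self_mem_nhdsWithin, mem_nhdsWithin_of_mem_nhds (Iio_mem_nhds hb')] with η hη hηb
  rw [Set.mem_Ioi] at hη
  rw [Set.mem_Iio] at hηb
  have himη : (-cb b + η * I).im = η - (b + b⁻¹) / 2 := by
    rw [add_im, neg_im, cb_im, im_ofReal_mul, I_im]; ring
  rw [eb_eq_mul_eb_add hb (z := -cb b + η * I) (by rw [himη]; linarith) (by rw [himη]; linarith)]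
  ring_nf

lemma neg_cb_add_mul_I (b : ℝ) : -cb b + b * I = ((b - b⁻¹) / 2 : ℝ) * I := by
  rw [cb]
  push_cast
  ring

/-- The functional equations for `b` and for `b⁻¹` give the slope of `e_b` at its zero `-c_b` in two
ways. -/
lemma mul_eb_eq_inv_mul_eb_neg (hb : 0 < b) :
    b * eb b (((b - b⁻¹) / 2 : ℝ) * I) = (b⁻¹ : ℝ) * eb b (-(((b - b⁻¹) / 2 : ℝ) * I)) := by
  have hlimit := tendsto_inv_mul_eb_neg_cb_add (inv_pos.2 hb)
  rw [neg_cb_add_mul_I, eb_inv, cb_inv, inv_inv,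
    show (b⁻¹ - b) / 2 = -((b - b⁻¹) / 2) by ring, ofReal_neg,
    neg_mul (((b - b⁻¹) / 2 : ℝ) : ℂ)] at hlimit
  have heq := tendsto_nhds_unique (tendsto_inv_mul_eb_neg_cb_add hb) hlimit
  rw [neg_cb_add_mul_I] at heq
  refine mul_left_cancel₀ (neg_ne_zero.2 two_pi_I_ne_zero) ?_
  linear_combination heq

lemma mul_norm_eb_eq_one (hb : 0 < b) : b * ‖eb b (((b - b⁻¹) / 2 : ℝ) * I)‖ = 1 := by
  have hsymm := congrArg norm (mul_eb_eq_inv_mul_eb_neg hb)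
  have hconj := norm_eb_mul_norm_eb_conj b (((b - b⁻¹) / 2 : ℝ) * I)
  rw [map_mul, conj_ofReal, conj_I, mul_neg] at hconj
  rw [norm_mul, norm_mul, norm_real, norm_real, Real.norm_of_nonneg hb.le,
    Real.norm_of_nonneg (inv_pos.2 hb).le, eq_inv_mul_iff_mul_eq₀ hb.ne'] at hsymm
  rw [← hsymm] at hconj
  refine (pow_eq_one_iff_of_nonneg (by positivity) two_ne_zero).1 ?_
  linear_combination hconj

lemma zeta0_eq (hb : 0 < b) :
    zeta0 b = cexp ((π / 4 + π * (b ^ 2 + b⁻¹ ^ 2) / 12 : ℝ) * I) := by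
  have hbC : (b : ℂ) ≠ 0 := ofReal_ne_zero.2 hb.ne'
  rw [zeta0, cb]
  congr 1
  push_cast
  field_simp
  rw [I_sq]
  ring

lemma im_logEb_half_sub_inv (hb : 0 < b) : (logEb b (((b - b⁻¹) / 2 : ℝ) * I)).im =
    π / 4 - π * (b ^ 2 + b⁻¹ ^ 2) / 12 := by
  have hb' := inv_pos.2 hb
  have hinversion := logEb_add_logEb_neg hb (z := ((b - b⁻¹) / 2 : ℝ) * I) (by
    rw [im_ofReal_mul, I_im, mul_one, abs_lt]
    constructor <;> linarith)
  have hconj := conj_logEb b (((b - b⁻¹) / 2 : ℝ) * I)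
  rw [map_mul, conj_ofReal, conj_I, mul_neg] at hconj
  rw [neg_eq_iff_eq_neg.1 hconj.symm, ← sub_eq_add_neg, sub_conj] at hinversion
  have him : 2 * (logEb b (((b - b⁻¹) / 2 : ℝ) * I)).im =
      π * (b ^ 2 + b⁻¹ ^ 2) / 12 - π * ((b - b⁻¹) / 2) ^ 2 := by
    rw [← ofReal_inj, ← mul_left_inj' I_ne_zero, hinversion]
    push_cast
    rw [mul_pow, I_sq]
    ring
  linear_combination him / 2 + π / 4 * mul_inv_cancel₀ hb.ne'

theorem eb_neg_cb_add_mul_zeta0 (hb : 0 < b) :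
    -I * b * eb b (-cb b + b * I) * zeta0 b = 1 := by
  rw [neg_cb_add_mul_I, zeta0_eq hb]
  set e := eb b (((b - b⁻¹) / 2 : ℝ) * I) with he
  have hpolar : e = ‖e‖ * cexp ((π / 4 - π * (b ^ 2 + b⁻¹ ^ 2) / 12 : ℝ) * I) := by
    rw [← im_logEb_half_sub_inv hb, he, eb_eq_exp_logEb, norm_exp, ofReal_exp, ← Complex.exp_add,
      re_add_im]
  have hexp : cexp ((π / 4 - π * (b ^ 2 + b⁻¹ ^ 2) / 12 : ℝ) * I) *
      cexp ((π / 4 + π * (b ^ 2 + b⁻¹ ^ 2) / 12 : ℝ) * I) = I := by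
    rw [← Complex.exp_add, ← add_mul, ← ofReal_add]
    convert exp_pi_div_two_mul_I using 3
    push_cast
    ring
  have hnorm : (b * ‖e‖ : ℂ) = 1 := by exact_mod_cast mul_norm_eb_eq_one hb
  rw [hpolar]
  linear_combination -I * (b * ‖e‖) * hexp - I * I * hnorm - I_mul_I

end ZeroOfEb

section BetaEvaluation

variable {b s : ℝ} {x : ℂ}

lemma tendsto_ebBetaKernel_line_atBot (hb : 0 < b) (hx : -((b + b⁻¹) / 2) < x.im)
    (hxs : x.im < s) (hs : s < 0) :
    Tendsto (fun t : ℝ ↦ ebBetaKernel b x (t + s * I)) atBot (𝓝 1) := by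
  have him (c : ℂ) : (s * I + c).im = s + c.im := by simp
  have hnum := tendsto_eb_add_atBot hb (c := s * I + cb b)
    (by rw [him]; exact abs_add_cb_im_lt hb hx hxs hs)
  have hden := tendsto_eb_add_atBot hb (c := s * I + (-x - cb b))
    (by rw [him]; exact abs_add_neg_sub_cb_im_lt hb hx hxs hs)
  simpa only [ebBetaKernel, ebRatio, add_assoc, div_one, Pi.div_def] using
    hnum.div hden one_ne_zero

lemma tendsto_mul_ebBetaIntegral (hb : 0 < b) (hx : -((b + b⁻¹) / 2) < x.im)
    (hxs : x.im < s) (hs : s < 0) :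
    Tendsto (fun η : ℝ ↦ η * ebBetaIntegral b x s (η * I)) (𝓝[>] 0) (𝓝 (2 * π : ℂ)⁻¹) := by
  have hscale : Tendsto (fun η : ℝ ↦ 2 * π * η) (𝓝[>] 0) (𝓝[>] 0) := by
    refine tendsto_nhdsWithin_iff.2 ⟨?_, eventually_mem_of_tendsto_nhdsWithin tendsto_id |>.mono
      fun η hη ↦ mul_pos two_pi_pos hη⟩
    simpa using (tendsto_id.const_mul (2 * π)).mono_left (nhdsWithin_le_nhds (a := (0 : ℝ)))
  have hlimit := ((tendsto_mul_fourierLaplace (mul_pos two_pi_pos (by linarith))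
    (continuous_ebBetaKernel_line hb hx hxs hs) (ebBetaKernel_line_isBigO hb hx hxs hs)
    (tendsto_ebBetaKernel_line_atBot hb hx hxs hs)).comp hscale).const_mul (2 * π : ℂ)⁻¹
  rw [mul_one] at hlimit
  refine hlimit.congr fun η ↦ ?_
  rw [Function.comp_apply, ebBetaIntegral]
  push_cast
  field_simp

lemma ebBetaQuotient_eq_inv (hb : 0 < b) (hb1 : b ≤ b⁻¹) (hx : -((b + b⁻¹) / 2) < x.im)
    (hxs : x.im < s) (hs : s < 0) {u : ℂ}
    (hu : u ∈ im ⁻¹' Set.Ioo (-((b + b⁻¹) / 2)) ((b + b⁻¹) / 2 + x.im)) :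
    ebBetaQuotient b x s u = (zeta0 b * eb b (-x - cb b))⁻¹ := by
  have hzero : Tendsto (fun η : ℝ ↦ (η * ebBetaIntegral b x s (η * I)) *
      ((η : ℂ)⁻¹ * eb b (-cb b + η * I)) / eb b (-x - cb b + η * I)) (𝓝[>] 0)
      (𝓝 ((2 * π : ℂ)⁻¹ * (-(2 * π * I * b) * eb b (-cb b + b * I)) / eb b (-x - cb b))) :=
    ((tendsto_mul_ebBetaIntegral hb hx hxs hs).mul (tendsto_inv_mul_eb_neg_cb_add hb)).div
      (tendsto_eb_add_mul_I hb (by rw [sub_im, neg_im, cb_im, abs_lt]; constructor <;> linarith))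
      (eb_ne_zero b _)
  have hconst : (fun η : ℝ ↦ (η * ebBetaIntegral b x s (η * I)) *
      ((η : ℂ)⁻¹ * eb b (-cb b + η * I)) / eb b (-x - cb b + η * I)) =ᶠ[𝓝[>] 0]
      fun _ ↦ ebBetaQuotient b x s u := by
    filter_upwards [self_mem_nhdsWithin, mem_nhdsWithin_of_mem_nhds
      (Iio_mem_nhds (by linarith : 0 < b + b⁻¹ + x.im))] with η hη₀ hη
    rw [Set.mem_Ioi] at hη₀
    rw [Set.mem_Iio] at hη
    have him : (-cb b + η * I).im = η - (b + b⁻¹) / 2 := by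
      rw [add_im, neg_im, cb_im, im_ofReal_mul, I_im]; ring
    rw [ebBetaQuotient_eq hb hb1 hx hxs hs hu (v := -cb b + η * I)
      (by rw [Set.mem_preimage, him]; constructor <;> linarith), ebBetaQuotient, ebRatio, add_zero,
      show -cb b + η * I + cb b = η * I by ring,
      show -cb b + η * I + -x = -x - cb b + η * I by ring]
    have : (η : ℂ) ≠ 0 := ofReal_ne_zero.2 hη₀.ne'
    field_simp
  rw [tendsto_nhds_unique (tendsto_const_nhds.congr' hconst.symm) hzero, mul_inv (zeta0 b),
    ← eq_inv_of_mul_eq_one_left (eb_neg_cb_add_mul_zeta0 hb)]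
  field_simp

lemma zeta0_inv (b : ℝ) : zeta0 b⁻¹ = zeta0 b := by
  rw [zeta0, cb_inv, zeta0]

lemma ebBetaIntegral_inv (b : ℝ) : ebBetaIntegral b⁻¹ = ebBetaIntegral b := by
  ext x s v
  rw [ebBetaIntegral, ebBetaIntegral, ebBetaKernel, ebBetaKernel, ebRatio_inv, cb_inv]

lemma ebBetaIntegral_add_cb_of_le (hb : 0 < b) (hb1 : b ≤ b⁻¹) (hx : -((b + b⁻¹) / 2) < x.im)
    (hxs : x.im < s) (hs : s < 0) {u : ℂ} (hu₁ : -((b + b⁻¹) / 2) < u.im)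
    (hu₂ : u.im < (b + b⁻¹) / 2 + x.im) : ebBetaIntegral b x s (u + cb b) =
      (zeta0 b)⁻¹ * eb b (u - x) / (eb b (-x - cb b) * eb b u) := by
  have hquotient := ebBetaQuotient_eq_inv hb hb1 hx hxs hs (u := u) ⟨hu₁, hu₂⟩
  rw [ebBetaQuotient, ebRatio, add_zero, ← sub_eq_add_neg, ← mul_div_assoc,
    div_eq_iff (eb_ne_zero b _)] at hquotient
  rw [eq_div_iff (mul_ne_zero (eb_ne_zero b _) (eb_ne_zero b _)), mul_left_comm, hquotient, mul_inv]
  field_simp [eb_ne_zero b (-x - cb b)]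

theorem ebBetaIntegral_add_cb (hb : 0 < b) (hx : -((b + b⁻¹) / 2) < x.im) (hxs : x.im < s)
    (hs : s < 0) {u : ℂ} (hu₁ : -((b + b⁻¹) / 2) < u.im)
    (hu₂ : u.im < (b + b⁻¹) / 2 + x.im) : ebBetaIntegral b x s (u + cb b) =
      (zeta0 b)⁻¹ * eb b (u - x) / (eb b (-x - cb b) * eb b u) := by
  rcases le_total b b⁻¹ with hb1 | hb1
  · exact ebBetaIntegral_add_cb_of_le hb hb1 hx hxs hs hu₁ hu₂
  · have hvalue := ebBetaIntegral_add_cb_of_le (inv_pos.2 hb) (by rwa [inv_inv])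
      (by rwa [inv_inv, add_comm]) hxs hs (u := u) (by rwa [inv_inv, add_comm])
      (by rwa [inv_inv, add_comm b⁻¹])
    rwa [ebBetaIntegral_inv, zeta0_inv, eb_inv, cb_inv] at hvalue

lemma stmt9Integrand_eq (b : ℝ) (u x : ℂ) (ε t : ℝ) : stmt9Integrand b u x ε t =
    cexp (-I * (2 * π * (u + cb b)) * (t + (-ε : ℝ) * I)) *
      ebBetaKernel b x (t + (-ε : ℝ) * I) := by
  rw [stmt9Integrand, ebBetaKernel, ebRatio, mul_div_assoc]
  push_cast
  ring_nf

end BetaEvaluation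

/-- the beta-type integral
`∫ e^{−2πiy(u+c_b)}·e_b(y+c_b)/e_b(y−x−c_b) dy = ζ₀⁻¹·e_b(u−x)/(e_b(−x−c_b)·e_b(u))`
over `y ∈ ℝ − iε`: absolute convergence, independence of `ε`, and the evaluation. -/
theorem statement9 (b : ℝ) (hb : 0 < b) (u x : ℂ)
    (hx₁ : -((b + b⁻¹) / 2) < x.im) (hx₂ : x.im < 0)
    (hu : |u.im| < (b + b⁻¹) / 2) (hux : |(u - x).im| < (b + b⁻¹) / 2)
    (ε : ℝ) (hε₁ : 0 < ε) (hε₂ : ε < -x.im) :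
    Integrable (stmt9Integrand b u x ε) ∧
    (∀ ε' : ℝ, 0 < ε' → ε' < -x.im →
      ∫ t : ℝ, stmt9Integrand b u x ε t = ∫ t : ℝ, stmt9Integrand b u x ε' t) ∧
    ∫ t : ℝ, stmt9Integrand b u x ε t =
      (zeta0 b)⁻¹ * eb b (u - x) / (eb b (-x - cb b) * eb b u) := by
  have hu₁ : -((b + b⁻¹) / 2) < u.im := (abs_lt.1 hu).1
  have hu₂ : u.im < (b + b⁻¹) / 2 + x.im := by
    rw [sub_im] at hux
    linarith [(abs_lt.1 hux).2]
  have hvalue {δ : ℝ} (hδ₀ : 0 < δ) (hδ : δ < -x.im) : ∫ t : ℝ, stmt9Integrand b u x δ t =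
      (zeta0 b)⁻¹ * eb b (u - x) / (eb b (-x - cb b) * eb b u) := by
    simp only [stmt9Integrand_eq]
    exact ebBetaIntegral_add_cb hb hx₁ (lt_neg_of_lt_neg hδ) (neg_neg_of_pos hδ₀) hu₁ hu₂
  have hintegrable : Integrable (stmt9Integrand b u x ε) := by
    simp only [funext (stmt9Integrand_eq b u x ε)]
    exact integrable_cexp_mul_ebBetaKernel hb hx₁ (lt_neg_of_lt_neg hε₂) (neg_neg_of_pos hε₁)
      (by rw [add_cb_im]; linarith) (by rw [add_cb_im]; linarith)
  exact ⟨hintegrable, fun ε' hε'₀ hε' ↦ (hvalue hε₁ hε₂).trans (hvalue hε'₀ hε').symm,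
    hvalue hε₁ hε₂⟩

end
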